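/- arXiv:1606.05103 — 2 statements merged into one kernel-verified Lean document; each statement's English description precedes it below -/
import Mathlib

section
/- (Remark 1: expansion of the Hamiltonian and of the reduced Hamiltonian for ε-scaled configurations.) Fix r₀ > 0, z₀ ∈ ℝ, n ≥ 1 and distinct points b₁,…,bₙ ∈ ℝ². For ε small set a_{i,ε} := (r₀ + r(bᵢ)/√|log ε|, z₀ + z(bᵢ)/√|log ε|) ∈ H, Γ_ε(r₀,n) := n r₀ ( π|log ε| + γ + π n log r₀ + π n(3 log 2 − 2) + π((n−1)/2) log|log ε| ), W_{ε,r₀}(b₁,…,bₙ) := π Σᵢ r(bᵢ) √|log ε| − π r₀ Σ_{i≠j} log|bᵢ−b_j|, P(a₁,…,aₙ) := π Σᵢ r(aᵢ)², and W(b₁,…,bₙ) := −Σ_{i≠j} log|bᵢ−b_j| − (1/(2r₀²)) Σᵢ r(bᵢ)². Then, as ε → 0: (i) H_ε(a_{1,ε},…,a_{n,ε}) − Γ_ε(r₀,n) − W_{ε,r₀}(b₁,…,bₙ) → 0; and (ii) ( H_ε − (|log ε|/(2r₀)) P )(a_{1,ε},…,a_{n,ε}) + (π/2) n r₀ |log ε|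 − Γ_ε(r₀,n) − π r₀ W(b₁,…,bₙ) → 0. -/
open MeasureTheory Filter Metric
open scoped Topology Real

noncomputable section

/-- Euclidean norm on `ℝ × ℝ`. -/
def nE (v : ℝ × ℝ) : ℝ := Real.sqrt (v.1 ^ 2 + v.2 ^ 2)

/-- Euclidean squared norm on `ℝ × ℝ`. -/
def sqE (v : ℝ × ℝ) : ℝ := v.1 ^ 2 + v.2 ^ 2

/-- Euclidean distance on `ℝ × ℝ`. -/
def dE (p q : ℝ × ℝ) : ℝ := nE (p - q)

/-- Euclidean open ball in `ℝ × ℝ`. -/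
def ballE (a : ℝ × ℝ) (r : ℝ) : Set (ℝ × ℝ) := {p | dE p a < r}

/-- The open half plane `H = {(r,z) : r > 0}`. -/
def Hp : Set (ℝ × ℝ) := {p | 0 < p.1}

/-- Partial derivative in the `r` direction, complex valued. -/
def pdR (u : ℝ × ℝ → ℂ) (p : ℝ × ℝ) : ℂ := fderiv ℝ u p (1, 0)
/-- Partial derivative in the `z` direction, complex valued. -/
def pdZ (u : ℝ × ℝ → ℂ) (p : ℝ × ℝ) : ℂ := fderiv ℝ u p (0, 1)
/-- Partial derivative in the `r` direction, real valued. -/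
def pdRr (f : ℝ × ℝ → ℝ) (p : ℝ × ℝ) : ℝ := fderiv ℝ f p (1, 0)
/-- Partial derivative in the `z` direction, real valued. -/
def pdZr (f : ℝ × ℝ → ℝ) (p : ℝ × ℝ) : ℝ := fderiv ℝ f p (0, 1)

/-- Gradient of a real function on `ℝ × ℝ`. -/
def gradR (f : ℝ × ℝ → ℝ) (p : ℝ × ℝ) : ℝ × ℝ := (pdRr f p, pdZr f p)

/-- `y × w = Re (i y conj w)`. -/
def crossC (y w : ℂ) : ℝ := (Complex.I * y * (starRingEnd ℂ) w).re

/-- Jacobian `Ju = ∂_r u × ∂_z u`. -/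
def Jac (u : ℝ × ℝ → ℂ) (p : ℝ × ℝ) : ℝ := crossC (pdR u p) (pdZ u p)

/-- Ginzburg–Landau energy density. -/
def eGL (ε : ℝ) (u : ℝ × ℝ → ℂ) (p : ℝ × ℝ) : ℝ :=
  (‖pdR u p‖ ^ 2 + ‖pdZ u p‖ ^ 2) / 2 + (1 - ‖u p‖ ^ 2) ^ 2 / (4 * ε ^ 2)

/-- Weighted Ginzburg–Landau energy on the half plane. -/
def Ew (ε : ℝ) (u : ℝ × ℝ → ℂ) : ℝ := ∫ p in Hp, eGL ε u p * p.1

/-- `r` component of the current `j(u) = Im (conj u ∇u)`. -/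
def jr (u : ℝ × ℝ → ℂ) (p : ℝ × ℝ) : ℝ := ((starRingEnd ℂ) (u p) * pdR u p).im
/-- `z` component of the current `j(u)`. -/
def jz (u : ℝ × ℝ → ℂ) (p : ℝ × ℝ) : ℝ := ((starRingEnd ℂ) (u p) * pdZ u p).im

/-- The loop-current vector potential `A_a`. -/
def Avec (a : ℝ × ℝ) (p : ℝ × ℝ) : ℝ :=
  (a.1 / 2) * ∫ t in (0:ℝ)..(2 * π),
    Real.cos t / Real.sqrt (a.1 ^ 2 + p.1 ^ 2 + (p.2 - a.2) ^ 2 - 2 * a.1 * p.1 * Real.cos t)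

/-- Ginzburg–Landau energy on the unit disc. -/
def eDisc (ε : ℝ) (v : ℝ × ℝ → ℂ) : ℝ :=
  ∫ p in ballE ((0:ℝ), (0:ℝ)) 1,
    ((‖pdR v p‖ ^ 2 + ‖pdZ v p‖ ^ 2) / 2 + (1 - ‖v p‖ ^ 2) ^ 2 / (4 * ε ^ 2))

/-- The constant `γ` of Bethuel–Brezis–Hélein. -/
def glGamma : ℝ :=
  Filter.liminf (fun ε : ℝ =>
      sInf {E : ℝ | ∃ v : ℝ × ℝ → ℂ,
        DifferentiableOn ℝ v (ballE ((0:ℝ), (0:ℝ)) 1) ∧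
        IntegrableOn (fun p => (‖pdR v p‖ ^ 2 + ‖pdZ v p‖ ^ 2) / 2
            + (1 - ‖v p‖ ^ 2) ^ 2 / (4 * ε ^ 2)) (ballE ((0:ℝ), (0:ℝ)) 1) ∧
        (∀ p : ℝ × ℝ, nE p = 1 → v p = (p.1 : ℂ) + (p.2 : ℂ) * Complex.I) ∧
        E = eDisc ε v}
      - π * |Real.log ε|) (𝓝[>] (0:ℝ))

/-- The Hamiltonian `H_ε`. -/
def Hfun (ε : ℝ) {n : ℕ} (a : Fin n → ℝ × ℝ) : ℝ :=
  ∑ i, (a i).1 * (π * Real.log ((a i).1 / ε) + glGamma + π * (3 * Real.log 2 - 2)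
      + π * ∑ j ∈ Finset.univ.erase i, Avec (a j) (a i))

/-- `ρ_a = (1/4) min (min_{i≠j} |aᵢ-aⱼ|, minᵢ r(aᵢ))`. -/
def rhoConf {n : ℕ} (a : Fin n → ℝ × ℝ) : ℝ :=
  (1 / 4) * sInf ({d | ∃ i j : Fin n, i ≠ j ∧ d = dE (a i) (a j)} ∪ {d | ∃ i, d = (a i).1})

/-- Positive part. -/
def posPart' (x : ℝ) : ℝ := max x 0

/-- Admissible test functions for the `Ẇ^{-1,1}(Ω)` norm. -/
def W11Adm (Ω : Set (ℝ × ℝ)) (φ : ℝ × ℝ → ℝ) : Prop :=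
  (∀ p q : ℝ × ℝ, |φ p - φ q| ≤ dE p q) ∧ HasCompactSupport φ ∧ ∀ p ∉ Ω, φ p = 0

/-- `‖Ju − π Σᵢ δ_{aᵢ}‖_{Ẇ^{-1,1}(Ω)}`. -/
def w11JacDiff (Ω : Set (ℝ × ℝ)) (u : ℝ × ℝ → ℂ) {n : ℕ} (a : Fin n → ℝ × ℝ) : ℝ :=
  sSup {x | ∃ φ, W11Adm Ω φ ∧ x = (∫ p in Ω, Jac u p * φ p) - π * ∑ i, φ (a i)}

/-- `Ẇ^{-1,1}(Ω)` norm of a locally integrable function. -/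
def w11Fn (Ω : Set (ℝ × ℝ)) (f : ℝ × ℝ → ℝ) : ℝ :=
  sSup {x | ∃ φ, W11Adm Ω φ ∧ x = ∫ p in Ω, f p * φ p}

/-- `div (r ∇ v)`. -/
def divRGrad (v : ℝ × ℝ → ℂ) (p : ℝ × ℝ) : ℂ :=
  fderiv ℝ (fun q => (q.1 : ℂ) * pdR v q) p (1, 0)
    + fderiv ℝ (fun q => (q.1 : ℂ) * pdZ v q) p (0, 1)

/-- A finite-energy solution of the cylindrical Gross–Pitaevskii equation `(GP)^c_ε`. -/
structure IsGPSolution (ε : ℝ) (u : ℝ → ℝ × ℝ → ℂ) : Prop where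
  smooth : ContDiffOn ℝ (⊤ : ℕ∞) (fun q : (ℝ × ℝ) × ℝ => u q.2 q.1) (closure Hp ×ˢ (Set.univ : Set ℝ))
  eqn : ∀ t : ℝ, ∀ p ∈ Hp,
    Complex.I * (p.1 : ℂ) * deriv (fun τ => u τ p) t - divRGrad (u t) p
      = ((p.1 : ℂ) / (ε : ℂ) ^ 2) * u t p * (1 - (‖u t p‖ : ℂ) ^ 2)
  bdry : ∀ t : ℝ, ∀ p : ℝ × ℝ, p.1 = 0 → pdR (u t) p = 0
  energyFin : ∀ t : ℝ, IntegrableOn (fun p => eGL ε (u t) p * p.1) Hp volume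
  energyConst : ∀ t : ℝ, Ew ε (u t) = Ew ε (u 0)

/-- `∇_{aᵢ} H_ε`. -/
def gradHi (ε : ℝ) {n : ℕ} (a : Fin n → ℝ × ℝ) (i : Fin n) : ℝ × ℝ :=
  gradR (fun x => Hfun ε (Function.update a i x)) (a i)

/-- The matrix `𝕁` with rows `(0, -1/r)` and `(1/r, 0)`. -/
def Jmat (r : ℝ) (v : ℝ × ℝ) : ℝ × ℝ := (-v.2 / r, v.1 / r)

/-- The system `(LF)_ε`. -/
def IsLFepsSol (ε : ℝ) {n : ℕ} (a : ℝ → Fin n → ℝ × ℝ) (I : Set ℝ) : Prop :=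
  ∀ i : Fin n, ∀ s ∈ I,
    HasDerivWithinAt (fun τ => a τ i)
      ((1 / (π * |Real.log ε|)) • Jmat ((a s i).1) (gradHi ε (a s) i)) I s

/-- `(x, y)^⊥ = (-y, x)`. -/
def perp2 (v : ℝ × ℝ) : ℝ × ℝ := (-v.2, v.1)

/-- The limiting leapfrogging system `(LF)`. -/
def IsLFSol (r₀ : ℝ) {n : ℕ} (b : ℝ → Fin n → ℝ × ℝ) (I : Set ℝ) : Prop :=
  ∀ i : Fin n, ∀ s ∈ I,
    HasDerivWithinAt (fun τ => b τ i)
      ((∑ j ∈ Finset.univ.erase i, (sqE (b s i - b s j))⁻¹ • perp2 (b s i - b s j))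
        - ((b s i).1 / r₀ ^ 2) • ((0:ℝ), (1:ℝ))) I s

/-- The `ε`-scaled configuration of points around `(r₀, z₀)`. -/
def aScaled (r₀ z₀ : ℝ) {n : ℕ} (b : Fin n → ℝ × ℝ) (ε : ℝ) (i : Fin n) : ℝ × ℝ :=
  (r₀ + (b i).1 / Real.sqrt |Real.log ε|, z₀ + (b i).2 / Real.sqrt |Real.log ε|)

/-- `Ψ*_ξ = Σᵢ A_{ξᵢ}`. -/
def PsiStar {n : ℕ} (ξ : Fin n → ℝ × ℝ) (p : ℝ × ℝ) : ℝ := ∑ i, Avec (ξ i) p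

/-- `r Ψ*_ξ`. -/
def rPsiStar {n : ℕ} (ξ : Fin n → ℝ × ℝ) (p : ℝ × ℝ) : ℝ := p.1 * PsiStar ξ p

/-- `r` component of `j*_ξ = -(1/r) ∇^⊥ (r Ψ*_ξ)`. -/
def jrStar {n : ℕ} (ξ : Fin n → ℝ × ℝ) (p : ℝ × ℝ) : ℝ := (1 / p.1) * pdZr (rPsiStar ξ) p
/-- `z` component of `j*_ξ`. -/
def jzStar {n : ℕ} (ξ : Fin n → ℝ × ℝ) (p : ℝ × ℝ) : ℝ := -(1 / p.1) * pdRr (rPsiStar ξ) p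

/-- Energy density of the modulus `e_ε(|u|)`. -/
def eGLmod (ε : ℝ) (u : ℝ × ℝ → ℂ) (p : ℝ × ℝ) : ℝ :=
  ((pdRr (fun q => ‖u q‖) p) ^ 2 + (pdZr (fun q => ‖u q‖) p) ^ 2) / 2
    + (1 - ‖u p‖ ^ 2) ^ 2 / (4 * ε ^ 2)

/-- The core component `𝒞ᵢ`. -/
def coreComp {n : ℕ} (ξ : Fin n → ℝ × ℝ) (rξ : ℝ) (i : Fin n) : Set (ℝ × ℝ) :=
  insert (ξ i)
    (connectedComponentIn {p : ℝ × ℝ | rPsiStar ξ (ξ i + (rξ, 0)) ≤ rPsiStar ξ p}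
      (ξ i + (rξ, 0)))

-- `r Ψ^♮_ξ`, the truncated stream function.
open Classical in
def rPsiNat {n : ℕ} (ξ : Fin n → ℝ × ℝ) (rξ : ℝ) (p : ℝ × ℝ) : ℝ :=
  if h : ∃ i, p ∈ coreComp ξ rξ i then rPsiStar ξ (ξ h.choose + (rξ, 0))
  else rPsiStar ξ p

/-- `r` component of the truncated current `j^♮(u*_ξ)`. -/
def jrNat {n : ℕ} (ξ : Fin n → ℝ × ℝ) (rξ : ℝ) (p : ℝ × ℝ) : ℝ :=
  (1 / p.1) * pdZr (rPsiNat ξ rξ) p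
/-- `z` component of the truncated current `j^♮(u*_ξ)`. -/
def jzNat {n : ℕ} (ξ : Fin n → ℝ × ℝ) (rξ : ℝ) (p : ℝ × ℝ) : ℝ :=
  -(1 / p.1) * pdRr (rPsiNat ξ rξ) p
/-- The truncated current `j^♮(u*_ξ)`. -/
def jNat {n : ℕ} (ξ : Fin n → ℝ × ℝ) (rξ : ℝ) (p : ℝ × ℝ) : ℝ × ℝ :=
  (jrNat ξ rξ p, jzNat ξ rξ p)

/-- Second partial derivatives. -/
def pd2RRr (f : ℝ × ℝ → ℝ) (p : ℝ × ℝ) : ℝ := fderiv ℝ (pdRr f) p (1, 0)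
def pd2RZr (f : ℝ × ℝ → ℝ) (p : ℝ × ℝ) : ℝ := fderiv ℝ (pdZr f) p (1, 0)
def pd2ZZr (f : ℝ × ℝ → ℝ) (p : ℝ × ℝ) : ℝ := fderiv ℝ (pdZr f) p (0, 1)

/-- The functional `F(X, φ)` for a vector field `X`. -/
def Ffun (X : ℝ × ℝ → ℝ × ℝ) (φ : ℝ × ℝ → ℝ) : ℝ :=
  ∫ p in Hp,
    (-(1 / p.1) * (X p).1 * (X p).2 * pdRr φ p + (1 / p.1) * (X p).1 ^ 2 * pdZr φ p
      + (X p).1 * (X p).2 * pd2RRr φ p + (X p).2 ^ 2 * pd2RZr φ p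
      - (X p).1 ^ 2 * pd2RZr φ p - (X p).1 * (X p).2 * pd2ZZr φ p)

/-- `Ω₀ = {r ≥ r₀/4}`. -/
def Omega0 (r₀ : ℝ) : Set (ℝ × ℝ) := {p | r₀ / 4 ≤ p.1}

/-- Excess energy `Σ_a = [E^w_ε(u) − H_ε(a)]⁺`. -/
def SigA (ε : ℝ) {n : ℕ} (u : ℝ × ℝ → ℂ) (a : Fin n → ℝ × ℝ) : ℝ :=
  posPart' (Ew ε u - Hfun ε a)

/-- Localization scale `r_a`. -/
def rA (r₀ : ℝ) {n : ℕ} (u : ℝ × ℝ → ℂ) (a : Fin n → ℝ × ℝ) : ℝ :=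
  w11JacDiff (Omega0 r₀) u a

/-- `Σ^r_a = Σ_a + r_a |log ε|`. -/
def SigRA (ε r₀ : ℝ) {n : ℕ} (u : ℝ × ℝ → ℂ) (a : Fin n → ℝ × ℝ) : ℝ :=
  SigA ε u a + rA r₀ u a * |Real.log ε|

/-- Hypothesis `(H₁)`. -/
def HypH1 (ε K₁ r₀ : ℝ) {n : ℕ} (a : Fin n → ℝ × ℝ) : Prop :=
  (∀ i j : Fin n, i ≠ j → 8 / |Real.log ε| ≤ dE (a i) (a j) ∧ dE (a i) (a j) ≤ K₁) ∧
  ∀ i, r₀ / 2 ≤ (a i).1 ∧ (a i).1 ≤ 2 * r₀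

/-- Hypothesis `(H₀)`. -/
def HypH0 (ε K₀ r₀ : ℝ) {n : ℕ} (a : Fin n → ℝ × ℝ) : Prop :=
  (∀ i j : Fin n, i ≠ j →
    K₀⁻¹ / Real.sqrt |Real.log ε| ≤ dE (a i) (a j) ∧
    dE (a i) (a j) ≤ K₀ / Real.sqrt |Real.log ε|) ∧
  (∀ i, r₀ / 2 ≤ (a i).1 ∧ (a i).1 ≤ 2 * r₀) ∧
  (∀ i, |(a i).2| ≤ K₀)

/-- The conclusions of Proposition 2.1 for the points `ξ`. -/
def Concl21 (ε C₁ r₀ : ℝ) {n : ℕ} (u : ℝ × ℝ → ℂ) (a ξ : Fin n → ℝ × ℝ) : Prop :=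
  (∀ i, ξ i ∈ Hp) ∧
  w11JacDiff {p : ℝ × ℝ | C₁ * (SigA ε u ξ + 1) / |Real.log ε| ≤ p.1} u ξ
      ≤ C₁ * ε * |Real.log ε| ^ C₁ * Real.exp (C₁ * SigRA ε r₀ u a) ∧
  (∫ p in Hp \ ⋃ i, ballE (ξ i) (ε ^ ((2:ℝ)/3)),
      (eGLmod ε u p
        + ((jr u p / ‖u p‖ - jrStar ξ p) ^ 2 + (jz u p / ‖u p‖ - jzStar ξ p) ^ 2)) * p.1)
      ≤ C₁ * (SigA ε u ξ
        + ε ^ ((1:ℝ)/3) * |Real.log ε| ^ C₁ * Real.exp (C₁ * SigRA ε r₀ u a)) ∧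
  SigA ε u ξ ≤ SigA ε u a + C₁ * rA r₀ u a * |Real.log ε|
      + C₁ * ε * |Real.log ε| ^ C₁ * Real.exp (C₁ * SigRA ε r₀ u a)

/-- A smooth cut-off at scale `Rε`. -/
def IsCutoff (Cχ Rε : ℝ) (χ : ℝ × ℝ → ℝ) : Prop :=
  ContDiff ℝ (⊤ : ℕ∞) χ ∧ (∀ p, χ p ∈ Set.Icc (0:ℝ) 1) ∧
  (∀ p : ℝ × ℝ, p ∉ (Set.Icc (0:ℝ) (2 * Rε)) ×ˢ (Set.Icc (-(2 * Rε)) (2 * Rε)) → χ p = 0) ∧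
  HasCompactSupport χ ∧
  (∀ p ∈ (Set.Icc (0:ℝ) Rε) ×ˢ (Set.Icc (-Rε) Rε), χ p = 1) ∧
  (∀ p, nE (gradR χ p) ≤ Cχ / Rε)

/-- Localized momentum `P_ε(u)`. -/
def Peps (χ : ℝ × ℝ → ℝ) (u : ℝ × ℝ → ℂ) : ℝ := ∫ p in Hp, Jac u p * p.1 ^ 2 * χ p

/-- The setting of Theorem 1.2 : a solution of `(LF)_ε` on `[0,S₀]` with the
separation and radius bounds. -/
def LFSetting (ε K₀ r₀ S₀ : ℝ) {n : ℕ} (a : ℝ → Fin n → ℝ × ℝ) : Prop :=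
  IsLFepsSol ε a (Set.Icc 0 S₀) ∧
  ∀ s ∈ Set.Icc (0:ℝ) S₀,
    (∀ i j : Fin n, i ≠ j →
      K₀⁻¹ / Real.sqrt |Real.log ε| ≤ dE (a s i) (a s j) ∧
      dE (a s i) (a s j) ≤ K₀ / Real.sqrt |Real.log ε|) ∧
    ∀ i, r₀ / 2 ≤ (a s i).1 ∧ (a s i).1 ≤ 2 * r₀

/-- `r_a^s`. -/
def rasF (ε r₀ : ℝ) {n : ℕ} (u : ℝ → ℝ × ℝ → ℂ) (a : ℝ → Fin n → ℝ × ℝ) (s : ℝ) : ℝ :=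
  rA r₀ (u (s / |Real.log ε|)) (a s)

/-- `ρ_min = K₀⁻¹/√|log ε|`. -/
def rhoMinF (ε K₀ : ℝ) : ℝ := K₀⁻¹ / Real.sqrt |Real.log ε|

/-- The stopping time `S_stop`. -/
def SstopF (ε K₀ r₀ S₀ : ℝ) {n : ℕ} (u : ℝ → ℝ × ℝ → ℂ) (a : ℝ → Fin n → ℝ × ℝ) : ℝ :=
  sSup {S | S ∈ Set.Icc (0:ℝ) S₀ ∧ ∀ s ∈ Set.Icc (0:ℝ) S, rasF ε r₀ u a s ≤ rhoMinF ε K₀ / 8}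

/-- `r_ξ^s`. -/
def rxiF (ε C₁ r₀ : ℝ) {n : ℕ} (u : ℝ → ℝ × ℝ → ℂ) (a : ℝ → Fin n → ℝ × ℝ) (s : ℝ) : ℝ :=
  C₁ * ε * |Real.log ε| ^ C₁ *
    Real.exp (C₁ * (SigA ε (u 0) (a 0) + rasF ε r₀ u a s * |Real.log ε|))

/-- The radial Ginzburg–Landau vortex profile. -/
def IsProfile (f : ℝ → ℝ) : Prop :=
  f 0 = 0 ∧ Filter.Tendsto f Filter.atTop (𝓝 1) ∧ (∀ ρ : ℝ, f ρ ∈ Set.Icc (0:ℝ) 1) ∧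
  ∃ f' f'' : ℝ → ℝ, ∀ ρ : ℝ, 0 < ρ →
    HasDerivAt f (f' ρ) ρ ∧ HasDerivAt f' (f'' ρ) ρ ∧
    f'' ρ + f' ρ / ρ - f ρ / ρ ^ 2 + f ρ * (1 - f ρ ^ 2) = 0

/-- The singular unimodular vortex-ring map associated to a point `a ∈ H`. -/
def IsSingularRing (a : ℝ × ℝ) (u : ℝ × ℝ → ℂ) : Prop :=
  ContDiffOn ℝ (⊤ : ℕ∞) u (Hp \ {a}) ∧ (∀ p ∈ Hp, ‖u p‖ = 1) ∧
  ∀ p ∈ Hp \ {a},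
    p.1 * jr u p = pdZr (fun q => q.1 * Avec a q) p ∧
    p.1 * jz u p = -pdRr (fun q => q.1 * Avec a q) p

/-- Standard basis of `ℝ × ℝ`. -/
def e2 (k : Fin 2) : ℝ × ℝ := if k = 0 then (1, 0) else (0, 1)
/-- Antisymmetric symbol. -/
def epsSym (i j : Fin 2) : ℝ := if i = 0 ∧ j = 1 then 1 else if i = 1 ∧ j = 0 then -1 else 0
/-- `(y, w) = Re (y conj w)`. -/
def rinnerC (y w : ℂ) : ℝ := (y * (starRingEnd ℂ) w).re
/-- `∂_k u`. -/
def pdC (k : Fin 2) (u : ℝ × ℝ → ℂ) (p : ℝ × ℝ) : ℂ := fderiv ℝ u p (e2 k)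
/-- `∂_{ik} φ`. -/
def pdr2 (i k : Fin 2) (φ : ℝ × ℝ → ℝ) (p : ℝ × ℝ) : ℝ :=
  fderiv ℝ (fun q => fderiv ℝ φ q (e2 k)) p (e2 i)

/-- The functional `F(∇v, φ)` of equation (2.8). -/
def FGPc (v : ℝ × ℝ → ℂ) (φ : ℝ × ℝ → ℝ) : ℝ :=
  -(∫ p in Hp, ∑ i : Fin 2, ∑ j : Fin 2, ∑ k : Fin 2,
      epsSym i j * ((if k = (0 : Fin 2) then 1 / p.1 else 0) * rinnerC (pdC j v p) (pdC k v p))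
        * fderiv ℝ φ p (e2 i))
  + ∫ p in Hp, ∑ i : Fin 2, ∑ j : Fin 2, ∑ k : Fin 2,
      epsSym i j * rinnerC (pdC j v p) (pdC k v p) * pdr2 i k φ p

/-- Regularised elliptic integral. -/
def ellF (k : ℝ) : ℝ :=
  ∫ s in (0:ℝ)..(π / 2), (1 - 2 * Real.sin s ^ 2) / Real.sqrt (k ^ 2 + Real.sin s ^ 2)

theorem ell_cont (k : ℝ) (hk : 0 < k) (g : ℝ → ℝ) (hg : Continuous g) :
    Continuous (fun s => g s / Real.sqrt (k ^ 2 + Real.sin s ^ 2)) := by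
  apply hg.div (by fun_prop)
  intro s
  positivity

theorem ell_arsinh (k : ℝ) (hk : 0 < k) :
    ∫ s in (0:ℝ)..(π / 2), Real.cos s / Real.sqrt (k ^ 2 + Real.sin s ^ 2)
      = Real.arsinh (1 / k) := by
  have h : ∀ s ∈ Set.uIcc (0:ℝ) (π / 2), HasDerivAt (fun s => Real.arsinh (Real.sin s / k))
      (Real.cos s / Real.sqrt (k ^ 2 + Real.sin s ^ 2)) s := by
    intro s _
    have h1 := ((Real.hasDerivAt_sin s).div_const k).arsinh
    convert h1 using 1
    have : Real.sqrt (k ^ 2 + Real.sin s ^ 2) = k * Real.sqrt (1 + (Real.sin s / k) ^ 2) := by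
      rw [show k ^ 2 + Real.sin s ^ 2 = k ^ 2 * (1 + (Real.sin s / k) ^ 2) by field_simp,
        Real.sqrt_mul (by positivity), Real.sqrt_sq hk.le]
    rw [this]
    have : 0 < Real.sqrt (1 + (Real.sin s / k) ^ 2) := by positivity
    simp only [smul_eq_mul]
    field_simp
  rw [intervalIntegral.integral_eq_sub_of_hasDerivAt h
    ((ell_cont k hk _ Real.continuous_cos).intervalIntegrable _ _)]
  simp

theorem arsinh_log (k : ℝ) (hk : 0 < k) :
    Real.arsinh (1 / k) + Real.log k = Real.log (1 + Real.sqrt (1 + k ^ 2)) := by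
  rw [Real.arsinh, ← Real.log_mul (by positivity) hk.ne']
  congr 1
  have : Real.sqrt (1 + (1 / k) ^ 2) * k = Real.sqrt (1 + k ^ 2) := by
    nth_rewrite 2 [← Real.sqrt_sq hk.le]
    rw [← Real.sqrt_mul (by positivity)]
    congr 1
    field_simp
    ring
  rw [add_mul, this]
  field_simp

theorem ell_rem :
    Tendsto (fun k : ℝ => ∫ s in (0:ℝ)..(π / 2),
        (1 - 2 * Real.sin s ^ 2 - Real.cos s) / Real.sqrt (k ^ 2 + Real.sin s ^ 2))
      (𝓝[>] 0) (𝓝 (Real.log 2 - 2)) := by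
  have hval : ∫ s in (0:ℝ)..(π / 2), (Real.sin s / (1 + Real.cos s) - 2 * Real.sin s)
      = Real.log 2 - 2 := by
    have hpos : ∀ s ∈ Set.uIcc (0:ℝ) (π / 2), 0 < 1 + Real.cos s := by
      intro s hs
      rw [Set.uIcc_of_le (by positivity)] at hs
      have := Real.cos_nonneg_of_mem_Icc (x := s) ⟨by linarith [hs.1, Real.pi_pos], hs.2⟩
      linarith
    have h : ∀ s ∈ Set.uIcc (0:ℝ) (π / 2),
        HasDerivAt (fun s => -Real.log (1 + Real.cos s) + 2 * Real.cos s)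
          (Real.sin s / (1 + Real.cos s) - 2 * Real.sin s) s := by
      intro s hs
      have h1 := (((Real.hasDerivAt_cos s).const_add 1).log (hpos s hs).ne').neg.add
        ((Real.hasDerivAt_cos s).const_mul 2)
      exact h1.congr_deriv (by ring)
    rw [intervalIntegral.integral_eq_sub_of_hasDerivAt h]
    · simp; norm_num; ring
    · apply ContinuousOn.intervalIntegrable
      apply ContinuousOn.sub _ (by fun_prop)
      exact ContinuousOn.div (by fun_prop) (by fun_prop) (fun s hs => (hpos s hs).ne')
  rw [← hval]
  apply intervalIntegral.tendsto_integral_filter_of_dominated_convergence (fun _ => (3:ℝ))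
  · filter_upwards [self_mem_nhdsWithin] with k hk
    exact (ell_cont k hk _ (by fun_prop)).aestronglyMeasurable
  · filter_upwards [self_mem_nhdsWithin] with k hk
    refine Filter.Eventually.of_forall fun s hs => ?_
    rw [Set.uIoc_of_le (by positivity)] at hs
    have hs0 : 0 < Real.sin s := Real.sin_pos_of_pos_of_lt_pi hs.1 (by linarith [hs.2, Real.pi_pos])
    have hc0 := Real.cos_nonneg_of_mem_Icc (x := s) ⟨by linarith [hs.1, Real.pi_pos], hs.2⟩
    have hsc := Real.sin_sq_add_cos_sq s
    have hle : Real.sin s ≤ Real.sqrt (k ^ 2 + Real.sin s ^ 2) :=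
      Real.le_sqrt_of_sq_le (by nlinarith [sq_nonneg k])
    have hs1 := Real.sin_le_one s
    have hc1 := Real.cos_le_one s
    have hq : 1 - Real.cos s ≤ Real.sin s := by nlinarith
    rw [Real.norm_eq_abs, abs_div, abs_of_nonneg (Real.sqrt_nonneg _),
      div_le_iff₀ (lt_of_lt_of_le hs0 hle), abs_le]
    constructor <;> nlinarith
  · exact intervalIntegrable_const
  · refine Filter.Eventually.of_forall fun s hs => ?_
    rw [Set.uIoc_of_le (by positivity)] at hs
    have hs0 : 0 < Real.sin s := Real.sin_pos_of_pos_of_lt_pi hs.1 (by linarith [hs.2, Real.pi_pos])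
    have hc0 := Real.cos_nonneg_of_mem_Icc (x := s) ⟨by linarith [hs.1, Real.pi_pos], hs.2⟩
    have hsc := Real.sin_sq_add_cos_sq s
    have h1 : Tendsto (fun k : ℝ => (1 - 2 * Real.sin s ^ 2 - Real.cos s)
        / Real.sqrt (k ^ 2 + Real.sin s ^ 2)) (𝓝 0)
        (𝓝 ((1 - 2 * Real.sin s ^ 2 - Real.cos s) / Real.sqrt (0 ^ 2 + Real.sin s ^ 2))) := by
      apply Tendsto.div tendsto_const_nhds
      · exact (by fun_prop : Continuous (fun k : ℝ => Real.sqrt (k ^ 2 + Real.sin s ^ 2))).tendsto 0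
      · positivity
    have h2 : (1 - 2 * Real.sin s ^ 2 - Real.cos s) / Real.sqrt (0 ^ 2 + Real.sin s ^ 2)
        = Real.sin s / (1 + Real.cos s) - 2 * Real.sin s := by
      rw [show (0:ℝ) ^ 2 + Real.sin s ^ 2 = Real.sin s ^ 2 by ring, Real.sqrt_sq hs0.le]
      have : 0 < 1 + Real.cos s := by linarith
      field_simp
      nlinarith
    rw [h2] at h1
    exact h1.mono_left nhdsWithin_le_nhds

theorem ellF_tendsto :
    Tendsto (fun k : ℝ => ellF k + Real.log k) (𝓝[>] 0) (𝓝 (2 * Real.log 2 - 2)) := by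
  have h1 : Tendsto (fun k : ℝ => Real.log (1 + Real.sqrt (1 + k ^ 2))) (𝓝[>] 0)
      (𝓝 (Real.log 2)) := by
    have : ContinuousAt (fun k : ℝ => Real.log (1 + Real.sqrt (1 + k ^ 2))) 0 := by
      apply ContinuousAt.log (by fun_prop)
      positivity
    have h := this.tendsto
    simp only [ne_eq, OfNat.ofNat_ne_zero, not_false_eq_true, zero_pow, add_zero,
      Real.sqrt_one] at h
    rw [one_add_one_eq_two] at h
    exact h.mono_left nhdsWithin_le_nhds
  have h2 := ell_rem.add h1
  rw [show Real.log 2 - 2 + Real.log 2 = 2 * Real.log 2 - 2 by ring] at h2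
  refine h2.congr' ?_
  filter_upwards [self_mem_nhdsWithin] with k hk
  have hk : 0 < k := hk
  rw [← arsinh_log k hk, ← ell_arsinh k hk, ← add_assoc,
    ← intervalIntegral.integral_add
      ((ell_cont k hk _ (by fun_prop)).intervalIntegrable _ _)
      ((ell_cont k hk _ (by fun_prop)).intervalIntegrable _ _), ellF]
  congr 1
  apply intervalIntegral.integral_congr
  intro s _
  simp only
  ring

theorem Avec_eq (a p : ℝ × ℝ) (ha : 0 < a.1) (hp : 0 < p.1) (hne : 0 < dE a p) :
    Avec a p = a.1 / Real.sqrt (a.1 * p.1) * ellF (dE a p / (2 * Real.sqrt (a.1 * p.1))) := by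
  set q := Real.sqrt (a.1 * p.1) with hq
  have hq0 : 0 < q := by positivity
  have hq2 : q ^ 2 = a.1 * p.1 := Real.sq_sqrt (by positivity)
  set k := dE a p / (2 * q) with hk
  have hk0 : 0 < k := by positivity
  have hd2 : dE a p ^ 2 = (a.1 - p.1) ^ 2 + (a.2 - p.2) ^ 2 := by
    unfold dE nE
    rw [Real.sq_sqrt (by positivity)]
    simp
  have hdk : dE a p = 2 * q * k := by rw [hk]; field_simp
  set G : ℝ → ℝ := fun s => (1 - 2 * Real.sin s ^ 2) / Real.sqrt (k ^ 2 + Real.sin s ^ 2) with hG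
  have hGc : Continuous G := ell_cont k hk0 _ (by fun_prop)
  have e1 : ∀ t : ℝ, Real.cos t / Real.sqrt (a.1 ^ 2 + p.1 ^ 2 + (p.2 - a.2) ^ 2
      - 2 * a.1 * p.1 * Real.cos t) = (1 / (2 * q)) * G (t / 2) := by
    intro t
    have hc : Real.cos t = 1 - 2 * Real.sin (t / 2) ^ 2 := by
      have h1 := Real.cos_two_mul (t / 2)
      have h2 := Real.sin_sq_add_cos_sq (t / 2)
      rw [show 2 * (t / 2) = t by ring] at h1
      linarith
    have hr : a.1 ^ 2 + p.1 ^ 2 + (p.2 - a.2) ^ 2 - 2 * a.1 * p.1 * Real.cos t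
        = (2 * q) ^ 2 * (k ^ 2 + Real.sin (t / 2) ^ 2) := by
      rw [hc]
      rw [hdk] at hd2
      linear_combination (-1) * hd2 - 4 * Real.sin (t / 2) ^ 2 * hq2
    rw [hr, Real.sqrt_mul (by positivity), Real.sqrt_sq (by positivity), hG, hc]
    have : 0 < Real.sqrt (k ^ 2 + Real.sin (t / 2) ^ 2) := by positivity
    simp only
    field_simp
  have e2 : ∫ t in (0:ℝ)..(2 * π), G (t / 2) = 4 * ellF k := by
    have h1 : ∫ t in (0:ℝ)..(2 * π), G (t / 2) = 2 * ∫ s in (0:ℝ)..π, G s := by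
      rw [intervalIntegral.integral_comp_div G two_ne_zero]
      simp
    have h2 : ∫ s in (π / 2)..π, G s = ∫ s in (0:ℝ)..(π / 2), G s := by
      have := intervalIntegral.integral_comp_sub_left (a := 0) (b := π / 2) G π
      rw [show π - π / 2 = π / 2 by ring, sub_zero] at this
      rw [← this]
      apply intervalIntegral.integral_congr
      intro s _
      simp [hG, Real.sin_pi_sub]
    have h3 := intervalIntegral.integral_add_adjacent_intervals (μ := volume)
      (hGc.intervalIntegrable 0 (π / 2)) (hGc.intervalIntegrable (π / 2) π)
    rw [h1, ← h3, h2]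
    unfold ellF
    ring
  unfold Avec
  simp_rw [e1]
  rw [intervalIntegral.integral_const_mul, e2]
  field_simp
  ring

theorem log_div_tendsto : Tendsto (fun s : ℝ => Real.log s / s) atTop (𝓝 0) :=
  Real.isLittleO_log_id_atTop.tendsto_div_nhds_zero

theorem add_div_tendsto (r c : ℝ) : Tendsto (fun s : ℝ => r + c / s) atTop (𝓝 r) := by
  simpa using (tendsto_const_nhds (x := r)).add ((tendsto_const_nhds (x := c)).div_atTop tendsto_id)

theorem Avec_tendsto (r₀ : ℝ) (hr₀ : 0 < r₀) (z₀ : ℝ) (b c : ℝ × ℝ) (hbc : 0 < dE b c) :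
    Tendsto (fun s : ℝ => Avec (r₀ + b.1 / s, z₀ + b.2 / s) (r₀ + c.1 / s, z₀ + c.2 / s)
        - Real.log s) atTop
      (𝓝 (Real.log r₀ + (3 * Real.log 2 - 2) - Real.log (dE b c))) := by
  have hB := add_div_tendsto r₀ b.1
  have hC := add_div_tendsto r₀ c.1
  have hBp := hB.eventually (lt_mem_nhds hr₀)
  have hCp := hC.eventually (lt_mem_nhds hr₀)
  have hq : Tendsto (fun s : ℝ => Real.sqrt ((r₀ + b.1 / s) * (r₀ + c.1 / s))) atTop (𝓝 r₀) := by
    have := (hB.mul hC).sqrt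
    rwa [Real.sqrt_mul_self hr₀.le] at this
  have hc : Tendsto (fun s : ℝ => (r₀ + b.1 / s) / Real.sqrt ((r₀ + b.1 / s) * (r₀ + c.1 / s)))
      atTop (𝓝 1) := by
    have := hB.div hq hr₀.ne'
    rwa [div_self hr₀.ne'] at this
  have hk : Tendsto (fun s : ℝ => dE b c / s
      / (2 * Real.sqrt ((r₀ + b.1 / s) * (r₀ + c.1 / s)))) atTop (𝓝[>] 0) := by
    rw [tendsto_nhdsWithin_iff]
    constructor
    · have h1 : Tendsto (fun s : ℝ => dE b c / s) atTop (𝓝 0) :=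
        tendsto_const_nhds.div_atTop tendsto_id
      have := h1.div (hq.const_mul 2) (by positivity)
      rw [zero_div] at this
      exact this
    · filter_upwards [hBp, hCp, eventually_gt_atTop 0] with s h1 h2 h3
      rw [Set.mem_Ioi]
      positivity
  have hF := ellF_tendsto.comp hk
  -- the factor multiplying the logarithm
  have hcl : Tendsto (fun s : ℝ => ((r₀ + b.1 / s)
      / Real.sqrt ((r₀ + b.1 / s) * (r₀ + c.1 / s)) - 1) * Real.log s) atTop (𝓝 0) := by
    have h1 : Tendsto (fun s : ℝ => (b.1 - c.1) / (Real.sqrt ((r₀ + b.1 / s) * (r₀ + c.1 / s))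
        * ((r₀ + b.1 / s) / Real.sqrt ((r₀ + b.1 / s) * (r₀ + c.1 / s)) + 1))
        * ((r₀ + b.1 / s) / Real.sqrt ((r₀ + b.1 / s) * (r₀ + c.1 / s)))
        * (Real.log s / s)) atTop (𝓝 ((b.1 - c.1) / (r₀ * (1 + 1)) * 1 * 0)) :=
      ((tendsto_const_nhds.div (hq.mul (hc.add_const 1)) (by positivity)).mul hc).mul
        log_div_tendsto
    rw [mul_zero] at h1
    refine h1.congr' ?_
    filter_upwards [hBp, hCp, eventually_gt_atTop 0] with s h1 h2 h3
    have hX : (b.1 - c.1) / s = (r₀ + b.1 / s) - (r₀ + c.1 / s) := by ring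
    generalize r₀ + b.1 / s = x at *
    generalize r₀ + c.1 / s = y at *
    have hs2 : Real.sqrt (x * y) ^ 2 = x * y := Real.sq_sqrt (by positivity)
    have hs0 : 0 < Real.sqrt (x * y) := by positivity
    generalize Real.sqrt (x * y) = w at *
    have hbc1 : b.1 - c.1 = s * (x - y) := by rw [← hX]; field_simp
    rw [hbc1]
    field_simp
    linear_combination Real.log s * hs2
  have hlq : Tendsto (fun s : ℝ => Real.log (2 * Real.sqrt ((r₀ + b.1 / s) * (r₀ + c.1 / s))))
      atTop (𝓝 (Real.log (2 * r₀))) := (hq.const_mul 2).log (by positivity)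
  have hfin := ((hc.mul hF).sub (hc.mul (hlq.const_sub (Real.log (dE b c))))).add hcl
  rw [show 1 * (2 * Real.log 2 - 2) - 1 * (Real.log (dE b c) - Real.log (2 * r₀)) + 0
    = Real.log r₀ + (3 * Real.log 2 - 2) - Real.log (dE b c) by
      rw [Real.log_mul two_ne_zero hr₀.ne']; ring] at hfin
  refine hfin.congr' ?_
  filter_upwards [hBp, hCp, eventually_gt_atTop 0] with s h1 h2 h3
  have hd : dE (r₀ + b.1 / s, z₀ + b.2 / s) (r₀ + c.1 / s, z₀ + c.2 / s) = dE b c / s := by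
    unfold dE nE
    simp only [Prod.fst_sub, Prod.snd_sub]
    rw [← Real.sqrt_sq h3.le, ← Real.sqrt_div' _ (by positivity), Real.sqrt_sq h3.le]
    congr 1
    field_simp
    ring
  rw [Avec_eq _ _ h1 h2 (by rw [hd]; positivity), hd]
  simp only [Function.comp]
  have hs0 : 0 < Real.sqrt ((r₀ + b.1 / s) * (r₀ + c.1 / s)) := by positivity
  rw [Real.log_div (by positivity) (by positivity), Real.log_div hbc.ne' h3.ne']
  ring

theorem term_tendsto (r₀ : ℝ) (hr₀ : 0 < r₀) (z₀ : ℝ) (n : ℕ)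
    (b : Fin n → ℝ × ℝ) (hb : Function.Injective b) (i : Fin n) (g κ : ℝ)
    (hκ : κ = 3 * Real.log 2 - 2) :
    Tendsto (fun s : ℝ => (r₀ + (b i).1 / s) * (π * (Real.log (r₀ + (b i).1 / s) + s ^ 2) + g + π * κ
        + π * ∑ j ∈ Finset.univ.erase i,
          Avec (r₀ + (b j).1 / s, z₀ + (b j).2 / s) (r₀ + (b i).1 / s, z₀ + (b i).2 / s))
        - r₀ * (π * s ^ 2 + g + π * n * Real.log r₀ + π * n * κ + π * (n - 1 : ℝ) * Real.log s)
        - (π * (b i).1 * s - π * r₀ * ∑ j ∈ Finset.univ.erase i, Real.log (dE (b i) (b j))))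
      atTop (𝓝 0) := by
  have hα := add_div_tendsto r₀ (b i).1
  have hA : Tendsto (fun s : ℝ => ∑ j ∈ Finset.univ.erase i,
      ((r₀ + (b i).1 / s) * (Avec (r₀ + (b j).1 / s, z₀ + (b j).2 / s)
          (r₀ + (b i).1 / s, z₀ + (b i).2 / s) - Real.log s)
        - r₀ * (Real.log r₀ + κ - Real.log (dE (b i) (b j)))
        + (b i).1 * (Real.log s / s))) atTop (𝓝 (∑ j ∈ Finset.univ.erase i, 0)) := by
    apply tendsto_finsetSum
    intro j hj
    have hji : b j ≠ b i := fun h => (Finset.ne_of_mem_erase hj) (hb h)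
    have hsym : dE (b j) (b i) = dE (b i) (b j) := by
      unfold dE nE
      congr 1
      simp only [Prod.fst_sub, Prod.snd_sub]
      ring
    have hd : 0 < dE (b j) (b i) := by
      unfold dE nE
      apply Real.sqrt_pos.2
      simp only [Prod.fst_sub, Prod.snd_sub]
      by_contra hcon
      apply hji
      ext <;> nlinarith [sq_nonneg ((b j).1 - (b i).1), sq_nonneg ((b j).2 - (b i).2)]
    have h := Avec_tendsto r₀ hr₀ z₀ (b j) (b i) hd
    rw [hsym, ← hκ] at h
    have h2 := ((hα.mul h).sub_const (r₀ * (Real.log r₀ + κ - Real.log (dE (b i) (b j))))).add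
      (log_div_tendsto.const_mul (b i).1)
    simpa using h2
  have h1 := ((((hα.mul (hα.log hr₀.ne')).sub_const (r₀ * Real.log r₀)).const_mul π).add
    ((hα.sub_const r₀).mul_const (g + π * κ))).add (hA.const_mul π)
  simp only [Finset.sum_const_zero, sub_self, mul_zero, zero_mul, add_zero] at h1
  refine h1.congr' ?_
  filter_upwards [eventually_gt_atTop 0] with s hs
  have hcard : ((Finset.univ.erase i).card : ℝ) = n - 1 := by
    rw [Finset.card_erase_of_mem (Finset.mem_univ _), Finset.card_univ, Fintype.card_fin,
      Nat.cast_sub (by have := i.2; omega)]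
    simp
  simp only [Finset.sum_add_distrib, Finset.sum_sub_distrib, ← Finset.mul_sum, Finset.sum_const,
    nsmul_eq_mul, hcard]
  generalize ∑ j ∈ Finset.univ.erase i,
          Avec (r₀ + (b j).1 / s, z₀ + (b j).2 / s) (r₀ + (b i).1 / s, z₀ + (b i).2 / s) = S
  generalize ∑ j ∈ Finset.univ.erase i, Real.log (dE (b i) (b j)) = D
  field_simp
  ring

/-- **Remark 1** : expansion of the Hamiltonian and of the reduced Hamiltonian
for `ε`-scaled configurations. -/
theorem hamiltonian_expansion_scaled (r₀ : ℝ) (hr₀ : 0 < r₀) (z₀ : ℝ) (n : ℕ) (hn : 1 ≤ n)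
    (b : Fin n → ℝ × ℝ) (hb : Function.Injective b) :
    Tendsto (fun ε : ℝ => Hfun ε (aScaled r₀ z₀ b ε)
        - (n * r₀ * (π * |Real.log ε| + glGamma + π * n * Real.log r₀
            + π * n * (3 * Real.log 2 - 2) + π * ((n - 1 : ℝ) / 2) * Real.log |Real.log ε|))
        - (π * (∑ i, (b i).1) * Real.sqrt |Real.log ε|
            - π * r₀ * ∑ i, ∑ j ∈ Finset.univ.erase i, Real.log (dE (b i) (b j))))
      (𝓝[>] 0) (𝓝 0) ∧
    Tendsto (fun ε : ℝ => (Hfun ε (aScaled r₀ z₀ b ε)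
          - (|Real.log ε| / (2 * r₀)) * (π * ∑ i, (aScaled r₀ z₀ b ε i).1 ^ 2))
        + (π / 2) * n * r₀ * |Real.log ε|
        - (n * r₀ * (π * |Real.log ε| + glGamma + π * n * Real.log r₀
            + π * n * (3 * Real.log 2 - 2) + π * ((n - 1 : ℝ) / 2) * Real.log |Real.log ε|))
        - π * r₀ * (-(∑ i, ∑ j ∈ Finset.univ.erase i, Real.log (dE (b i) (b j)))
            - (1 / (2 * r₀ ^ 2)) * ∑ i, (b i).1 ^ 2))
      (𝓝[>] 0) (𝓝 0) := by
  have hL : Tendsto (fun ε : ℝ => |Real.log ε|) (𝓝[>] 0) atTop :=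
    tendsto_abs_atBot_atTop.comp Real.tendsto_log_nhdsGT_zero
  have hs : Tendsto (fun ε : ℝ => Real.sqrt |Real.log ε|) (𝓝[>] 0) atTop :=
    Real.tendsto_sqrt_atTop.comp hL
  have hsmall : ∀ᶠ ε : ℝ in 𝓝[>] 0, 0 < ε ∧ ε < 1 := by
    filter_upwards [Ioo_mem_nhdsGT (zero_lt_one (α := ℝ))] with ε hε
    exact hε
  have hsum := (tendsto_finsetSum Finset.univ (fun i _ =>
    term_tendsto r₀ hr₀ z₀ n b hb i glGamma (3 * Real.log 2 - 2) rfl)).comp hs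
  simp only [Finset.sum_const_zero] at hsum
  have key : Tendsto (fun ε : ℝ => Hfun ε (aScaled r₀ z₀ b ε)
        - (n * r₀ * (π * |Real.log ε| + glGamma + π * n * Real.log r₀
            + π * n * (3 * Real.log 2 - 2) + π * ((n - 1 : ℝ) / 2) * Real.log |Real.log ε|))
        - (π * (∑ i, (b i).1) * Real.sqrt |Real.log ε|
            - π * r₀ * ∑ i, ∑ j ∈ Finset.univ.erase i, Real.log (dE (b i) (b j))))
      (𝓝[>] 0) (𝓝 0) := by
    refine hsum.congr' ?_
    have hpos : ∀ᶠ ε : ℝ in 𝓝[>] 0, ∀ i, 0 < r₀ + (b i).1 / Real.sqrt |Real.log ε| :=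
      eventually_all.2 fun i =>
        ((add_div_tendsto r₀ (b i).1).comp hs).eventually (lt_mem_nhds hr₀)
    filter_upwards [hsmall, hpos] with ε hε hp
    have hlog : Real.log ε < 0 := Real.log_neg hε.1 hε.2
    have habs : |Real.log ε| = - Real.log ε := abs_of_neg hlog
    have hsq : Real.sqrt |Real.log ε| ^ 2 = |Real.log ε| := Real.sq_sqrt (abs_nonneg _)
    have hls : Real.log |Real.log ε| = 2 * Real.log (Real.sqrt |Real.log ε|) := by
      rw [← hsq, Real.log_pow, hsq]
      simp
    simp only [Function.comp, Hfun, aScaled]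
    rw [Finset.sum_sub_distrib, Finset.sum_sub_distrib, Finset.sum_sub_distrib]
    simp only [Finset.sum_const, Finset.card_univ, Fintype.card_fin, nsmul_eq_mul, hls,
      ← Finset.mul_sum, ← Finset.sum_mul]
    congr 1
    congr 1
    · apply Finset.sum_congr rfl
      intro i _
      rw [Real.log_div (hp i).ne' hε.1.ne', hsq]
      rw [sub_eq_add_neg (Real.log _) (Real.log ε), ← habs]
    · rw [hsq]
      ring
  refine ⟨key, key.congr' ?_⟩
  have hspos := hs.eventually_gt_atTop 0
  filter_upwards [hspos] with ε hε
  have hsq : Real.sqrt |Real.log ε| ^ 2 = |Real.log ε| := Real.sq_sqrt (abs_nonneg _)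
  have hP : ∑ i, (aScaled r₀ z₀ b ε i).1 ^ 2 = n * r₀ ^ 2
      + 2 * r₀ / Real.sqrt |Real.log ε| * (∑ i, (b i).1)
      + (∑ i, (b i).1 ^ 2) / |Real.log ε| := by
    simp only [aScaled, Finset.mul_sum, Finset.sum_div]
    have hn' : (n : ℝ) * r₀ ^ 2 = ∑ _i : Fin n, r₀ ^ 2 := by simp
    rw [hn', ← Finset.sum_add_distrib, ← Finset.sum_add_distrib]
    apply Finset.sum_congr rfl
    intro i _
    nth_rewrite 3 [← hsq]
    field_simp
    ring
  rw [hP]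
  generalize Hfun ε (aScaled r₀ z₀ b ε) = h
  generalize ∑ i, (b i).1 ^ 2 = B2
  generalize ∑ i, (b i).1 = B1
  generalize Real.log |Real.log ε| = ll
  rw [← hsq]
  rw [Real.sqrt_sq hε.le]
  generalize Real.sqrt |Real.log ε| = s at *
  field_simp
  ring

end
end

section
/- (Existence and uniqueness of the singular unimodular multi-vortex map.) Let n ≥ 1 and let a₁,…,aₙ be distinct points in H, and set Ψ*_a := Σᵢ A_{aᵢ}. Then there exists a map u*_a ∈ C^∞(H∖{a₁,…,aₙ}, S¹) ∩ W^{1,1}_loc(H, S¹) such that r j(u*_a) = −∇^⊥(r Ψ*_a) on H∖{a₁,…,aₙ}, and u*_a is unique up to multiplication by a constant of modulus one. Moreover, in the sense of distributions on H, div(r j(u*_a)) = 0 and curl(j(u*_a)) = 2π Σᵢ δ_{aᵢ}, where curl(X_r,X_z) := ∂_r X_z − ∂_z X_r. -/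
open MeasureTheory Filter Metric
open scoped Topology Real

noncomputable section

/-! ### Smoothness of parametric integrals -/

lemma mvx_bound {F : Type} [NormedAddCommGroup F]
    {U : Set (ℝ × ℝ)} (hU : IsOpen U) {f : (ℝ × ℝ) × ℝ → F}
    (hf : ContinuousOn f (U ×ˢ Set.univ)) (α β : ℝ) {x : ℝ × ℝ} (hx : x ∈ U) :
    ∃ s ∈ 𝓝 x, s ⊆ U ∧ ∃ C : ℝ, ∀ y ∈ s, ∀ t ∈ Set.uIoc α β, ‖f (y, t)‖ ≤ C := by
  obtain ⟨ε, hε, hb⟩ := nhds_basis_closedBall.mem_iff.1 (hU.mem_nhds hx)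
  have hc : IsCompact (closedBall x ε ×ˢ Set.uIcc α β) :=
    (isCompact_closedBall x ε).prod isCompact_uIcc
  obtain ⟨C, hC⟩ := hc.exists_bound_of_continuousOn
    (hf.mono (Set.prod_mono hb (Set.subset_univ _)))
  exact ⟨closedBall x ε, closedBall_mem_nhds x hε, hb, C, fun y hy t ht =>
    hC _ ⟨hy, Set.uIoc_subset_uIcc ht⟩⟩

lemma mvx_slice {F : Type} [NormedAddCommGroup F]
    {U : Set (ℝ × ℝ)} {f : (ℝ × ℝ) × ℝ → F}
    (hf : ContinuousOn f (U ×ˢ Set.univ)) {x : ℝ × ℝ} (hx : x ∈ U) :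
    Continuous (fun t => f (x, t)) := by
  rw [← continuousOn_univ]
  exact hf.comp (by fun_prop) (fun t _ => ⟨hx, trivial⟩)

lemma mvx_param_cont {F : Type} [NormedAddCommGroup F] [NormedSpace ℝ F] 
    {U : Set (ℝ × ℝ)} (hU : IsOpen U) {f : (ℝ × ℝ) × ℝ → F}
    (hf : ContinuousOn f (U ×ˢ Set.univ)) (α β : ℝ) :
    ContinuousOn (fun x => ∫ t in α..β, f (x, t)) U := by
  intro x hx
  apply ContinuousAt.continuousWithinAt
  obtain ⟨s, hs, hsU, C, hC⟩ := mvx_bound hU hf α β hx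
  apply intervalIntegral.continuousAt_of_dominated_interval (bound := fun _ => C)
  · filter_upwards [hs] with y hy
    exact (mvx_slice hf (hsU hy)).aestronglyMeasurable
  · filter_upwards [hs] with y hy
    exact Eventually.of_forall fun t ht => hC y hy t ht
  · exact intervalIntegrable_const
  · refine Eventually.of_forall fun t _ => ?_
    have : ContinuousAt f (x, t) := hf.continuousAt ((hU.prod isOpen_univ).mem_nhds ⟨hx, trivial⟩)
    exact ContinuousAt.comp (f := fun y => (y, t)) this (by fun_prop)

lemma mvx_param_fderiv {F : Type} [NormedAddCommGroup F] [NormedSpace ℝ F] 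
    {U : Set (ℝ × ℝ)} (hU : IsOpen U) {f : (ℝ × ℝ) × ℝ → F}
    (hf : ContDiffOn ℝ 1 f (U ×ˢ Set.univ)) (α β : ℝ) {x : ℝ × ℝ} (hx : x ∈ U) :
    HasFDerivAt (fun x => ∫ t in α..β, f (x, t))
      (∫ t in α..β, (fderiv ℝ f (x, t)).comp (ContinuousLinearMap.inl ℝ (ℝ × ℝ) ℝ)) x := by
  have hO : IsOpen (U ×ˢ (Set.univ : Set ℝ)) := hU.prod isOpen_univ
  have hd : ContinuousOn (fun q : (ℝ × ℝ) × ℝ =>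
      (fderiv ℝ f q).comp (ContinuousLinearMap.inl ℝ (ℝ × ℝ) ℝ)) (U ×ˢ Set.univ) :=
    (hf.continuousOn_fderiv_of_isOpen hO le_rfl).clm_comp continuousOn_const
  obtain ⟨s, hs, hsU, C, hC⟩ := mvx_bound hU hd α β hx
  apply intervalIntegral.hasFDerivAt_integral_of_dominated_of_fderiv_le (bound := fun _ => C)
    (F' := fun x t => (fderiv ℝ f (x, t)).comp (ContinuousLinearMap.inl ℝ (ℝ × ℝ) ℝ)) hs
  · filter_upwards [hs] with y hy
    exact (mvx_slice hf.continuousOn (hsU hy)).aestronglyMeasurable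
  · exact (mvx_slice hf.continuousOn hx).intervalIntegrable _ _
  · exact (mvx_slice hd hx).aestronglyMeasurable
  · exact Eventually.of_forall fun t ht y hy => hC y hy t ht
  · exact intervalIntegrable_const
  · refine Eventually.of_forall fun t _ y hy => ?_
    have h1 : HasFDerivAt f (fderiv ℝ f (y, t)) (y, t) :=
      ((hf.differentiableOn (by norm_num)).differentiableAt
        (hO.mem_nhds ⟨hsU hy, trivial⟩)).hasFDerivAt
    exact h1.comp y (hasFDerivAt_prodMk_left y t)

lemma mvx_param_contDiff_nat (n : ℕ) : ∀ {F : Type} [NormedAddCommGroup F] [NormedSpace ℝ F]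
    {U : Set (ℝ × ℝ)} (_ : IsOpen U) {f : (ℝ × ℝ) × ℝ → F}
    (_ : ContDiffOn ℝ n f (U ×ˢ Set.univ)) (α β : ℝ),
    ContDiffOn ℝ n (fun x => ∫ t in α..β, f (x, t)) U := by
  induction n with
  | zero =>
    intro F _ _ U hU f hf α β
    have := mvx_param_cont hU hf.continuousOn α β
    exact contDiffOn_zero.2 this
  | succ n ih =>
    intro F _ _ U hU f hf α β
    have hO : IsOpen (U ×ˢ (Set.univ : Set ℝ)) := hU.prod isOpen_univ
    have h1 : ContDiffOn ℝ 1 f (U ×ˢ Set.univ) := hf.of_le (by norm_cast; omega)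
    rw [Nat.cast_add, Nat.cast_one, contDiffOn_succ_iff_fderiv_of_isOpen hU]
    refine ⟨fun x hx => (mvx_param_fderiv hU h1 α β hx).differentiableAt.differentiableWithinAt,
      by simp, ?_⟩
    rw [Nat.cast_add, Nat.cast_one, contDiffOn_succ_iff_fderiv_of_isOpen hO] at hf
    have h2 : ContDiffOn ℝ n (fun q : (ℝ × ℝ) × ℝ =>
      (fderiv ℝ f q).comp (ContinuousLinearMap.inl ℝ (ℝ × ℝ) ℝ)) (U ×ˢ Set.univ) :=
      hf.2.2.clm_comp contDiffOn_const
    exact (ih hU h2 α β).congr fun x hx => (mvx_param_fderiv hU h1 α β hx).fderiv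

lemma mvx_param_contDiff {F : Type} [NormedAddCommGroup F] [NormedSpace ℝ F]
    {U : Set (ℝ × ℝ)} (hU : IsOpen U) {f : (ℝ × ℝ) × ℝ → F}
    (hf : ContDiffOn ℝ (⊤ : ℕ∞) f (U ×ˢ Set.univ)) (α β : ℝ) :
    ContDiffOn ℝ (⊤ : ℕ∞) (fun x => ∫ t in α..β, f (x, t)) U := by
  rw [contDiffOn_infty] at hf ⊢
  exact fun n => mvx_param_contDiff_nat n hU (hf n) α β

/-- The linear form `(x, y) ↦ P x + Q y`. -/
def mvL (P Q : ℝ) : ℝ × ℝ →L[ℝ] ℝ :=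
  P • ContinuousLinearMap.fst ℝ ℝ ℝ + Q • ContinuousLinearMap.snd ℝ ℝ ℝ

lemma mvL_apply (P Q : ℝ) (v : ℝ × ℝ) : mvL P Q v = P * v.1 + Q * v.2 := by
  simp [mvL]

lemma mvx_param_partials {U : Set (ℝ × ℝ)} (hU : IsOpen U) {f : (ℝ × ℝ) × ℝ → ℝ}
    (hf : ContDiffOn ℝ 1 f (U ×ˢ Set.univ)) (α β : ℝ) {x : ℝ × ℝ} (hx : x ∈ U) {D1 D2 : ℝ → ℝ}
    (h1 : ∀ t, HasDerivAt (fun s => f ((s, x.2), t)) (D1 t) x.1)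
    (h2 : ∀ t, HasDerivAt (fun s => f ((x.1, s), t)) (D2 t) x.2) :
    HasFDerivAt (fun x => ∫ t in α..β, f (x, t))
      (mvL (∫ t in α..β, D1 t) (∫ t in α..β, D2 t)) x := by
  have hO : IsOpen (U ×ˢ (Set.univ : Set ℝ)) := hU.prod isOpen_univ
  have hd : ContinuousOn (fun q : (ℝ × ℝ) × ℝ =>
      (fderiv ℝ f q).comp (ContinuousLinearMap.inl ℝ (ℝ × ℝ) ℝ)) (U ×ˢ Set.univ) :=
    (hf.continuousOn_fderiv_of_isOpen hO le_rfl).clm_comp continuousOn_const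
  have hi : IntervalIntegrable (fun t => (fderiv ℝ f (x, t)).comp
      (ContinuousLinearMap.inl ℝ (ℝ × ℝ) ℝ)) volume α β :=
    (mvx_slice hd hx).intervalIntegrable _ _
  have hfd : ∀ t, HasFDerivAt f (fderiv ℝ f (x, t)) (x, t) := fun t =>
      ((hf.differentiableOn (by norm_num)).differentiableAt
        (hO.mem_nhds ⟨hx, trivial⟩)).hasFDerivAt
  have e1 : ∀ t, ((fderiv ℝ f (x, t)).comp (ContinuousLinearMap.inl ℝ (ℝ × ℝ) ℝ)) (1, 0)
      = D1 t := by
    intro t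
    have hc : HasDerivAt (fun s : ℝ => (((s, x.2), t) : (ℝ × ℝ) × ℝ)) ((1, 0), 0) x.1 :=
      ((hasDerivAt_id x.1).prodMk (hasDerivAt_const x.1 x.2)).prodMk (hasDerivAt_const x.1 t)
    exact ((hfd t).comp_hasDerivAt (f := fun s : ℝ => (((s, x.2), t) : (ℝ × ℝ) × ℝ)) x.1 hc).unique
      (h1 t)
  have e2' : ∀ t, ((fderiv ℝ f (x, t)).comp (ContinuousLinearMap.inl ℝ (ℝ × ℝ) ℝ)) (0, 1)
      = D2 t := by
    intro t
    have hc : HasDerivAt (fun s : ℝ => (((x.1, s), t) : (ℝ × ℝ) × ℝ)) ((0, 1), 0) x.2 :=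
      ((hasDerivAt_const x.2 x.1).prodMk (hasDerivAt_id x.2)).prodMk (hasDerivAt_const x.2 t)
    exact ((hfd t).comp_hasDerivAt (f := fun s : ℝ => (((x.1, s), t) : (ℝ × ℝ) × ℝ)) x.2 hc).unique
      (h2 t)
  have := mvx_param_fderiv hU hf α β hx
  refine this.congr_fderiv ?_
  have g1 := ContinuousLinearMap.intervalIntegral_apply hi (1, 0)
  have g2 := ContinuousLinearMap.intervalIntegral_apply hi (0, 1)
  simp only [e1] at g1
  simp only [e2'] at g2
  ext
  · simpa [mvL] using g1
  · simpa [mvL] using g2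

/-- Squared distance to the point of the ring at angle `t`. -/
def mvSS (a : ℝ × ℝ) (q : (ℝ × ℝ) × ℝ) : ℝ :=
  a.1 ^ 2 + q.1.1 ^ 2 + (q.1.2 - a.2) ^ 2 - 2 * a.1 * q.1.1 * Real.cos q.2

/-- Distance to the point of the ring at angle `t`. -/
def mvS (a : ℝ × ℝ) (q : (ℝ × ℝ) × ℝ) : ℝ := Real.sqrt (mvSS a q)

/-- `r` component of the current. -/
def mvJR (a p : ℝ × ℝ) : ℝ :=
  -(a.1 / 2) * ∫ t in (0:ℝ)..(2 * π), Real.cos t * (p.2 - a.2) / mvS a (p, t) ^ 3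

/-- `z` component of the current. -/
def mvJZ (a p : ℝ × ℝ) : ℝ :=
  -(a.1 / 2) * ∫ t in (0:ℝ)..(2 * π), (a.1 - p.1 * Real.cos t) / mvS a (p, t) ^ 3

/-- The two branches of the phase. -/
def mvTh (σ : ℝ) (a p : ℝ × ℝ) : ℝ :=
  σ * (a.1 / 2) * ∫ t in (0:ℝ)..(2 * π),
    (a.1 - p.1 * Real.cos t) / (mvS a (p, t) * (σ * (p.2 - a.2) + mvS a (p, t)))

/-- The domains of the two branches. -/
def mvV (σ : ℝ) (a : ℝ × ℝ) : Set (ℝ × ℝ) :=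
  {p | p ∈ Hp ∧ (p.1 ≠ a.1 ∨ 0 < σ * (p.2 - a.2))}

lemma mvHp_open : IsOpen Hp := isOpen_lt continuous_const continuous_fst

lemma mvV_open (σ : ℝ) (a : ℝ × ℝ) : IsOpen (mvV σ a) := by
  apply mvHp_open.inter
  apply IsOpen.union
  · exact isOpen_ne_fun continuous_fst continuous_const
  · exact isOpen_lt continuous_const (by fun_prop : Continuous fun p : ℝ × ℝ => σ * (p.2 - a.2))

lemma mvSS_eq (a : ℝ × ℝ) (q : (ℝ × ℝ) × ℝ) :
    mvSS a q = (q.1.1 - a.1) ^ 2 + (q.1.2 - a.2) ^ 2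
      + 2 * a.1 * q.1.1 * (1 - Real.cos q.2) := by
  unfold mvSS; ring

lemma mvSS_ge {a : ℝ × ℝ} (ha : a ∈ Hp) {q : (ℝ × ℝ) × ℝ} (hq : q.1 ∈ Hp) :
    (q.1.1 - a.1) ^ 2 + (q.1.2 - a.2) ^ 2 ≤ mvSS a q := by
  rw [mvSS_eq]
  have h1 : 0 < a.1 := ha
  have h2 : 0 < q.1.1 := hq
  have h3 : 0 ≤ 1 - Real.cos q.2 := by linarith [Real.cos_le_one q.2]
  have := mul_nonneg (mul_pos h1 h2).le h3
  linarith

lemma mvSS_pos {a : ℝ × ℝ} (ha : a ∈ Hp) {q : (ℝ × ℝ) × ℝ} (hq : q.1 ∈ Hp) (hne : q.1 ≠ a) :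
    0 < mvSS a q := by
  refine lt_of_lt_of_le ?_ (mvSS_ge ha hq)
  rcases eq_or_ne q.1.1 a.1 with h | h
  · have : q.1.2 ≠ a.2 := fun h' => hne (Prod.ext h h')
    have := sub_ne_zero.2 this
    positivity
  · have := sub_ne_zero.2 h
    positivity

lemma mvV_ne {σ : ℝ} {a p : ℝ × ℝ} (hp : p ∈ mvV σ a) : p ≠ a := by
  rintro rfl
  rcases hp.2 with h | h
  · exact h rfl
  · simp at h

lemma mvS_pos {a : ℝ × ℝ} (ha : a ∈ Hp) {q : (ℝ × ℝ) × ℝ} (hq : q.1 ∈ Hp) (hne : q.1 ≠ a) :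
    0 < mvS a q := Real.sqrt_pos.2 (mvSS_pos ha hq hne)

lemma mvS_sq {a : ℝ × ℝ} (ha : a ∈ Hp) {q : (ℝ × ℝ) × ℝ} (hq : q.1 ∈ Hp) :
    mvS a q ^ 2 = mvSS a q :=
  Real.sq_sqrt ((by positivity : (0:ℝ) ≤ _).trans (mvSS_ge ha hq))

lemma mvD_pos {σ : ℝ} (hσ : σ ^ 2 = 1) {a : ℝ × ℝ} (ha : a ∈ Hp) {q : (ℝ × ℝ) × ℝ}
    (hq : q.1 ∈ mvV σ a) : 0 < σ * (q.1.2 - a.2) + mvS a q := by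
  have hS := mvS_pos ha hq.1 (mvV_ne hq)
  rcases lt_or_ge 0 (σ * (q.1.2 - a.2)) with h | h
  · positivity
  · have h1 : q.1.1 ≠ a.1 := hq.2.resolve_right (not_lt.2 h)
    have h2 := mvSS_ge ha hq.1
    rw [← mvS_sq ha hq.1] at h2
    have h3 : 0 < (q.1.1 - a.1) ^ 2 := by have := sub_ne_zero.2 h1; positivity
    have h4 : (σ * (q.1.2 - a.2)) ^ 2 = (q.1.2 - a.2) ^ 2 := by rw [mul_pow, hσ, one_mul]
    have h5 : |σ * (q.1.2 - a.2)| < mvS a q := by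
      apply abs_lt_of_sq_lt_sq _ hS.le
      linarith
    have := (abs_lt.1 h5).1
    linarith

lemma mvS_contDiffOn {a : ℝ × ℝ} (ha : a ∈ Hp) :
    ContDiffOn ℝ (⊤ : ℕ∞) (mvS a) ((Hp \ {a}) ×ˢ Set.univ) := by
  unfold mvS
  apply ContDiffOn.sqrt
  · unfold mvSS
    apply ContDiff.contDiffOn
    fun_prop
  · intro q hq
    exact (mvSS_pos ha hq.1.1 hq.1.2).ne'

lemma mvV_sub (σ : ℝ) (a : ℝ × ℝ) : mvV σ a ⊆ Hp \ {a} := fun _ hp => ⟨hp.1, mvV_ne hp⟩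

lemma mvHpa_open (a : ℝ × ℝ) : IsOpen (Hp \ {a}) := mvHp_open.sdiff isClosed_singleton

lemma mvKJR_contDiffOn {a : ℝ × ℝ} (ha : a ∈ Hp) :
    ContDiffOn ℝ (⊤ : ℕ∞) (fun q : (ℝ × ℝ) × ℝ => Real.cos q.2 * (q.1.2 - a.2) / mvS a q ^ 3)
      ((Hp \ {a}) ×ˢ Set.univ) := by
  apply ContDiffOn.div
  · apply ContDiff.contDiffOn; fun_prop
  · exact (mvS_contDiffOn ha).pow 3
  · intro q hq
    have := mvS_pos ha hq.1.1 hq.1.2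
    positivity

lemma mvKJZ_contDiffOn {a : ℝ × ℝ} (ha : a ∈ Hp) :
    ContDiffOn ℝ (⊤ : ℕ∞) (fun q : (ℝ × ℝ) × ℝ => (a.1 - q.1.1 * Real.cos q.2) / mvS a q ^ 3)
      ((Hp \ {a}) ×ˢ Set.univ) := by
  apply ContDiffOn.div
  · apply ContDiff.contDiffOn; fun_prop
  · exact (mvS_contDiffOn ha).pow 3
  · intro q hq
    have := mvS_pos ha hq.1.1 hq.1.2
    positivity

lemma mvKTh_contDiffOn {σ : ℝ} (hσ : σ ^ 2 = 1) {a : ℝ × ℝ} (ha : a ∈ Hp) :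
    ContDiffOn ℝ (⊤ : ℕ∞) (fun q : (ℝ × ℝ) × ℝ => (a.1 - q.1.1 * Real.cos q.2) /
      (mvS a q * (σ * (q.1.2 - a.2) + mvS a q))) (mvV σ a ×ˢ Set.univ) := by
  have hS := (mvS_contDiffOn ha).mono (Set.prod_mono (mvV_sub σ a) (Set.Subset.refl Set.univ))
  apply ContDiffOn.div
  · apply ContDiff.contDiffOn; fun_prop
  · apply hS.mul
    apply ContDiffOn.add _ hS
    apply ContDiff.contDiffOn; fun_prop
  · intro q hq
    have := mvS_pos ha hq.1.1 (mvV_ne hq.1)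
    have := mvD_pos hσ ha hq.1
    positivity

lemma mvKA_contDiffOn {a : ℝ × ℝ} (ha : a ∈ Hp) :
    ContDiffOn ℝ (⊤ : ℕ∞) (fun q : (ℝ × ℝ) × ℝ => q.1.1 * Real.cos q.2 / mvS a q)
      ((Hp \ {a}) ×ˢ Set.univ) := by
  apply ContDiffOn.div
  · apply ContDiff.contDiffOn; fun_prop
  · exact (mvS_contDiffOn ha)
  · intro q hq
    have := mvS_pos ha hq.1.1 hq.1.2
    positivity

lemma mvJR_contDiffOn {a : ℝ × ℝ} (ha : a ∈ Hp) :
    ContDiffOn ℝ (⊤ : ℕ∞) (mvJR a) (Hp \ {a}) :=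
  contDiffOn_const.mul (mvx_param_contDiff (mvHpa_open a) (mvKJR_contDiffOn ha) 0 (2 * π))

lemma mvJZ_contDiffOn {a : ℝ × ℝ} (ha : a ∈ Hp) :
    ContDiffOn ℝ (⊤ : ℕ∞) (mvJZ a) (Hp \ {a}) :=
  contDiffOn_const.mul (mvx_param_contDiff (mvHpa_open a) (mvKJZ_contDiffOn ha) 0 (2 * π))

lemma mvTh_contDiffOn {σ : ℝ} (hσ : σ ^ 2 = 1) {a : ℝ × ℝ} (ha : a ∈ Hp) :
    ContDiffOn ℝ (⊤ : ℕ∞) (mvTh σ a) (mvV σ a) :=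
  contDiffOn_const.mul (mvx_param_contDiff (mvV_open σ a) (mvKTh_contDiffOn hσ ha) 0 (2 * π))

/-! Derivatives of the distance -/

lemma mvS_dr {a : ℝ × ℝ} (ha : a ∈ Hp) {p : ℝ × ℝ} (hp : p ∈ Hp \ {a}) (t : ℝ) :
    HasDerivAt (fun s => mvS a ((s, p.2), t)) ((p.1 - a.1 * Real.cos t) / mvS a (p, t)) p.1 := by
  have h0 := mvSS_pos ha (q := (p, t)) hp.1 hp.2
  have h1 : HasDerivAt (fun s => mvSS a ((s, p.2), t)) (2 * p.1 - 2 * a.1 * Real.cos t) p.1 := by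
    unfold mvSS
    have := ((((hasDerivAt_id p.1).pow 2).const_add (a.1 ^ 2)).add_const ((p.2 - a.2) ^ 2)).sub
      (((hasDerivAt_id p.1).const_mul (2 * a.1)).mul_const (Real.cos t))
    refine this.congr_deriv ?_
    simp
  have h2 := h1.sqrt h0.ne'
  refine h2.congr_deriv ?_
  change _ / (2 * mvS a (p, t)) = _
  have := mvS_pos ha (q := (p, t)) hp.1 hp.2
  field_simp

lemma mvS_dz {a : ℝ × ℝ} (ha : a ∈ Hp) {p : ℝ × ℝ} (hp : p ∈ Hp \ {a}) (t : ℝ) :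
    HasDerivAt (fun s => mvS a ((p.1, s), t)) ((p.2 - a.2) / mvS a (p, t)) p.2 := by
  have h0 := mvSS_pos ha (q := (p, t)) hp.1 hp.2
  have h1 : HasDerivAt (fun s => mvSS a ((p.1, s), t)) (2 * (p.2 - a.2)) p.2 := by
    unfold mvSS
    have := ((((hasDerivAt_id p.2).sub_const a.2).pow 2).const_add (a.1 ^ 2 + p.1 ^ 2)).sub_const
      (2 * a.1 * p.1 * Real.cos t)
    refine this.congr_deriv ?_
    simp
  have h2 := h1.sqrt h0.ne'
  refine h2.congr_deriv ?_
  change _ / (2 * mvS a (p, t)) = _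
  have := mvS_pos ha (q := (p, t)) hp.1 hp.2
  field_simp

lemma mvS_dt {a : ℝ × ℝ} (ha : a ∈ Hp) {p : ℝ × ℝ} (hp : p ∈ Hp \ {a}) (t : ℝ) :
    HasDerivAt (fun s => mvS a (p, s)) (a.1 * p.1 * Real.sin t / mvS a (p, t)) t := by
  have h0 := mvSS_pos ha (q := (p, t)) hp.1 hp.2
  have h1 : HasDerivAt (fun s => mvSS a (p, s)) (2 * a.1 * p.1 * Real.sin t) t := by
    unfold mvSS
    have := ((Real.hasDerivAt_cos t).const_mul (2 * a.1 * p.1)).const_sub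
      (a.1 ^ 2 + p.1 ^ 2 + (p.2 - a.2) ^ 2)
    refine this.congr_deriv ?_
    simp
  have h2 := h1.sqrt h0.ne'
  refine h2.congr_deriv ?_
  change _ / (2 * mvS a (p, t)) = _
  have := mvS_pos ha (q := (p, t)) hp.1 hp.2
  field_simp

lemma mvS_cont {a : ℝ × ℝ} (p : ℝ × ℝ) : Continuous (fun t => mvS a (p, t)) := by
  unfold mvS mvSS; fun_prop

/-- Gradient of a branch of the phase. -/
lemma mvTh_hasFDerivAt {σ : ℝ} (hσ : σ ^ 2 = 1) {a : ℝ × ℝ} (ha : a ∈ Hp) {p : ℝ × ℝ}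
    (hp : p ∈ mvV σ a) : HasFDerivAt (mvTh σ a) (mvL (mvJR a p) (mvJZ a p)) p := by
  have hp' := mvV_sub σ a hp
  have hSp : ∀ t, 0 < mvS a (p, t) := fun t => mvS_pos ha hp.1 (mvV_ne hp)
  have hDp : ∀ t, 0 < σ * (p.2 - a.2) + mvS a (p, t) := fun t => mvD_pos hσ ha (q := (p, t)) hp
  have hsq : ∀ t, mvS a (p, t) ^ 2 =
      a.1 ^ 2 + p.1 ^ 2 + (p.2 - a.2) ^ 2 - 2 * a.1 * p.1 * Real.cos t :=
    fun t => mvS_sq ha (q := (p, t)) hp.1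
  have hsc := fun t => Real.sin_sq_add_cos_sq t
  -- the exact derivative in `t`
  set G : ℝ → ℝ := fun t => Real.cos t / (mvS a (p, t) * (σ * (p.2 - a.2) + mvS a (p, t)))
      - (σ * (p.2 - a.2) + 2 * mvS a (p, t)) * (a.1 * p.1 * Real.sin t ^ 2) /
        (mvS a (p, t) ^ 3 * (σ * (p.2 - a.2) + mvS a (p, t)) ^ 2) with hG
  have hGc : Continuous G := by
    have hc := mvS_cont (a := a) p
    apply Continuous.sub
    · apply Continuous.div (by fun_prop) (by fun_prop)
      intro t; have := hSp t; have := hDp t; positivity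
    · apply Continuous.div (by fun_prop) (by fun_prop)
      intro t; have := hSp t; have := hDp t; positivity
  have hGi : ∫ t in (0:ℝ)..(2 * π), G t = 0 := by
    rw [intervalIntegral.integral_eq_sub_of_hasDerivAt (f := fun t =>
      Real.sin t / (mvS a (p, t) * (σ * (p.2 - a.2) + mvS a (p, t))))]
    · simp
    · intro t _
      have hS := mvS_dt ha hp' t
      have h := (Real.hasDerivAt_sin t).div (hS.mul (hS.const_add (σ * (p.2 - a.2))))
        (mul_pos (hSp t) (hDp t)).ne'
      refine h.congr_deriv ?_
      have := hSp t; have := hDp t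
      simp only [hG, Pi.mul_apply]
      field_simp
      ring
    · exact hGc.intervalIntegrable _ _
  have hP := mvx_param_partials (mvV_open σ a)
    ((mvKTh_contDiffOn hσ ha).of_le (by exact_mod_cast le_top)) 0 (2 * π) hp
    (D1 := fun t => -σ * (Real.cos t * (p.2 - a.2) / mvS a (p, t) ^ 3) + G t)
    (D2 := fun t => -σ * ((a.1 - p.1 * Real.cos t) / mvS a (p, t) ^ 3)) ?_ ?_
  · have := hP.const_mul (σ * (a.1 / 2))
    refine this.congr_fderiv ?_
    have hci : Continuous (fun t => -σ * (Real.cos t * (p.2 - a.2) / mvS a (p, t) ^ 3)) := by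
      have hc := mvS_cont (a := a) p
      apply Continuous.mul continuous_const
      apply Continuous.div (by fun_prop) (by fun_prop)
      intro t; have := hSp t; positivity
    rw [intervalIntegral.integral_add (hci.intervalIntegrable _ _) (hGc.intervalIntegrable _ _),
      hGi, intervalIntegral.integral_const_mul, intervalIntegral.integral_const_mul]
    have hσ' : σ * σ = 1 := by rw [← sq]; exact hσ
    ext
    · simp only [mvL, mvJR, mvJZ]
      simp
      linear_combination ((a.1 / 2) * ∫ t in (0:ℝ)..(2 * π), Real.cos t * (p.2 - a.2) / mvS a (p, t) ^ 3) * hσ'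
    · simp only [mvL, mvJR, mvJZ]
      simp
      linear_combination ((a.1 / 2) * ∫ t in (0:ℝ)..(2 * π), (a.1 - p.1 * Real.cos t) / mvS a (p, t) ^ 3) * hσ'
  · intro t
    have hS := mvS_dr ha hp' t
    have h := (((hasDerivAt_id p.1).mul_const (Real.cos t)).const_sub a.1).div
      (hS.mul (hS.const_add (σ * (p.2 - a.2)))) (mul_pos (hSp t) (hDp t)).ne'
    refine h.congr_deriv ?_
    have h1 := hSp t; have h2 := hDp t; have h3 := hsq t; have h4 := hsc t
    simp only [hG, Pi.mul_apply, id]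
    generalize mvS a (p, t) = S at *
    have h5 : (σ * (p.2 - a.2)) ^ 2 = (p.2 - a.2) ^ 2 := by rw [mul_pow, hσ, one_mul]
    rw [← h5] at h3
    rw [show -σ * (Real.cos t * (p.2 - a.2) / S ^ 3) =
      -(Real.cos t * (σ * (p.2 - a.2)) / S ^ 3) by ring]
    generalize σ * (p.2 - a.2) = ζ at *
    generalize Real.cos t = C at *
    have h6 : Real.sin t ^ 2 = 1 - C ^ 2 := by linarith
    rw [h6]
    have key : -C * S ^ 2 * (ζ + S) - (a.1 - p.1 * C) * (p.1 - a.1 * C) * (ζ + 2 * S)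
        = -ζ * C * (ζ + S) ^ 2 + C * S ^ 2 * (ζ + S)
          - (ζ + 2 * S) * (a.1 * p.1 * (1 - C ^ 2)) := by
      linear_combination -(ζ + 2 * S) * C * h3
    trans (-C * S ^ 2 * (ζ + S) - (a.1 - p.1 * C) * (p.1 - a.1 * C) * (ζ + 2 * S))
      / (S ^ 3 * (ζ + S) ^ 2)
    · field_simp
      ring
    · rw [key]
      field_simp
      ring
  · intro t
    have hS := mvS_dz ha hp' t
    have h := ((hasDerivAt_const p.2 (a.1 - p.1 * Real.cos t))).div
      (hS.mul ((((hasDerivAt_id p.2).sub_const a.2).const_mul σ).add hS))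
        (mul_pos (hSp t) (hDp t)).ne'
    refine h.congr_deriv ?_
    have h1 := hSp t; have h2 := hDp t
    simp only [Pi.mul_apply, id, Pi.add_apply]
    generalize mvS a (p, t) = S at *
    obtain ⟨ζ, hζ⟩ : ∃ ζ, ζ = σ * (p.2 - a.2) := ⟨_, rfl⟩
    have hz : p.2 - a.2 = σ * ζ := by rw [hζ, ← mul_assoc, ← sq, hσ, one_mul]
    rw [← hζ] at h2 ⊢
    rw [hz]
    have h2' := h2.ne'
    field_simp
    ring

/-- Gradient of the stream function. -/
lemma mvrA_hasFDerivAt {a : ℝ × ℝ} (ha : a ∈ Hp) {p : ℝ × ℝ} (hp : p ∈ Hp \ {a}) :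
    HasFDerivAt (fun q : ℝ × ℝ => q.1 * Avec a q)
      (mvL (-(p.1 * mvJZ a p)) (p.1 * mvJR a p)) p := by
  have hSp : ∀ t, 0 < mvS a (p, t) := fun t => mvS_pos ha hp.1 hp.2
  have hsq : ∀ t, mvS a (p, t) ^ 2 =
      a.1 ^ 2 + p.1 ^ 2 + (p.2 - a.2) ^ 2 - 2 * a.1 * p.1 * Real.cos t :=
    fun t => mvS_sq ha (q := (p, t)) hp.1
  have hsc := fun t => Real.sin_sq_add_cos_sq t
  have hc := mvS_cont (a := a) p
  have heq : (fun q : ℝ × ℝ => q.1 * Avec a q) = fun q : ℝ × ℝ => (a.1 / 2) *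
      ∫ t in (0:ℝ)..(2 * π), q.1 * Real.cos t / mvS a (q, t) := by
    funext q
    unfold Avec mvS mvSS
    rw [mul_left_comm, ← intervalIntegral.integral_const_mul]
    simp only [mul_div_assoc]
  set G : ℝ → ℝ := fun t => Real.cos t / mvS a (p, t) -
    a.1 * p.1 * Real.sin t ^ 2 / mvS a (p, t) ^ 3 with hG
  have hGc : Continuous G := by
    apply Continuous.sub
    · apply Continuous.div (by fun_prop) (by fun_prop)
      intro t; have := hSp t; positivity
    · apply Continuous.div (by fun_prop) (by fun_prop)
      intro t; have := hSp t; positivity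
  have hGi : ∫ t in (0:ℝ)..(2 * π), G t = 0 := by
    rw [intervalIntegral.integral_eq_sub_of_hasDerivAt (f := fun t =>
      Real.sin t / mvS a (p, t))]
    · simp
    · intro t _
      have hS := mvS_dt ha hp t
      have h := (Real.hasDerivAt_sin t).div hS (hSp t).ne'
      refine h.congr_deriv ?_
      have := hSp t
      simp only [hG]
      field_simp
    · exact hGc.intervalIntegrable _ _
  rw [heq]
  have hP := mvx_param_partials (mvHpa_open a)
    ((mvKA_contDiffOn ha).of_le (by exact_mod_cast le_top)) 0 (2 * π) hp
    (D1 := fun t => p.1 * ((a.1 - p.1 * Real.cos t) / mvS a (p, t) ^ 3) + G t)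
    (D2 := fun t => -p.1 * (Real.cos t * (p.2 - a.2) / mvS a (p, t) ^ 3)) ?_ ?_
  · refine (hP.const_mul (a.1 / 2)).congr_fderiv ?_
    have hci : Continuous (fun t => p.1 * ((a.1 - p.1 * Real.cos t) / mvS a (p, t) ^ 3)) := by
      apply Continuous.mul continuous_const
      apply Continuous.div (by fun_prop) (by fun_prop)
      intro t; have := hSp t; positivity
    rw [intervalIntegral.integral_add (hci.intervalIntegrable _ _) (hGc.intervalIntegrable _ _),
      hGi, intervalIntegral.integral_const_mul, intervalIntegral.integral_const_mul]
    ext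
    · simp only [mvL, mvJR, mvJZ]
      simp
      ring
    · simp only [mvL, mvJR, mvJZ]
      simp
      ring
  · intro t
    have hS := mvS_dr ha hp t
    have h := (((hasDerivAt_id p.1).mul_const (Real.cos t))).div hS (hSp t).ne'
    refine h.congr_deriv ?_
    have h1 := hSp t; have h3 := hsq t; have h4 := hsc t
    simp only [hG, id]
    generalize mvS a (p, t) = S at *
    generalize Real.cos t = C at *
    have h6 : Real.sin t ^ 2 = 1 - C ^ 2 := by linarith
    rw [h6]
    field_simp
    ring
  · intro t
    have hS := mvS_dz ha hp t
    have h := ((hasDerivAt_const p.2 (p.1 * Real.cos t))).div hS (hSp t).ne'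
    refine h.congr_deriv ?_
    have h1 := hSp t
    field_simp
    ring

/-! ### The angular integral -/

lemma mv_ang_lt {A r : ℝ} (hr : 0 < r) (hA : r < A) :
    ∫ t in (0:ℝ)..(2 * π), A * ((A - r * Real.cos t) / (A ^ 2 + r ^ 2 - 2 * A * r * Real.cos t))
      = 2 * π := by
  have hp : ∀ t, 0 < A - r * Real.cos t := fun t => by nlinarith [Real.cos_le_one t]
  have hD : ∀ t, 0 < A ^ 2 + r ^ 2 - 2 * A * r * Real.cos t := fun t => by
    nlinarith [Real.cos_le_one t, mul_pos hr (hr.trans hA), sq_pos_of_pos (sub_pos.2 hA)]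
  rw [intervalIntegral.integral_eq_sub_of_hasDerivAt (f := fun t =>
    t + Real.arctan (r * Real.sin t / (A - r * Real.cos t)))]
  · simp
  · intro t _
    have h := (hasDerivAt_id t).add ((((Real.hasDerivAt_sin t).const_mul r).div
      (((Real.hasDerivAt_cos t).const_mul r).const_sub A) (hp t).ne').arctan)
    refine h.congr_deriv ?_
    have h1 := hp t
    have h2 := hD t
    have h3 := Real.sin_sq_add_cos_sq t
    have h4 : 1 + (r * Real.sin t / (A - r * Real.cos t)) ^ 2
        = (A ^ 2 + r ^ 2 - 2 * A * r * Real.cos t) / (A - r * Real.cos t) ^ 2 := by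
      field_simp
      linear_combination r ^ 2 * h3
    simp only [Pi.div_apply]
    rw [h4]
    have h5 : r * Real.cos t * (A - r * Real.cos t) - r * Real.sin t * -(r * -Real.sin t)
      = A * r * Real.cos t - r ^ 2 := by linear_combination -r ^ 2 * h3
    rw [h5]
    have h6 := h2.ne'
    have h7 := h1.ne'
    rw [one_div_div, div_mul_div_cancel₀' (pow_ne_zero 2 h7), ← mul_div_assoc,
      eq_div_iff h6, add_mul, div_mul_cancel₀ _ h6]
    ring
  · apply Continuous.intervalIntegrable
    apply Continuous.mul continuous_const
    exact Continuous.div (by fun_prop) (by fun_prop) (fun t => (hD t).ne')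

lemma mv_ang_gt {A r : ℝ} (hA : 0 < A) (hr : A < r) :
    ∫ t in (0:ℝ)..(2 * π), A * ((A - r * Real.cos t) / (A ^ 2 + r ^ 2 - 2 * A * r * Real.cos t))
      = 0 := by
  have hp : ∀ t, 0 < r - A * Real.cos t := fun t => by nlinarith [Real.cos_le_one t]
  have hD : ∀ t, 0 < A ^ 2 + r ^ 2 - 2 * A * r * Real.cos t := fun t => by
    nlinarith [Real.cos_le_one t, mul_pos hA (hA.trans hr), sq_pos_of_pos (sub_pos.2 hr)]
  rw [intervalIntegral.integral_eq_sub_of_hasDerivAt (f := fun t =>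
    -Real.arctan (A * Real.sin t / (r - A * Real.cos t)))]
  · simp
  · intro t _
    have h := ((((Real.hasDerivAt_sin t).const_mul A).div
      (((Real.hasDerivAt_cos t).const_mul A).const_sub r) (hp t).ne').arctan).neg
    refine h.congr_deriv ?_
    have h1 := hp t
    have h2 := hD t
    have h3 := Real.sin_sq_add_cos_sq t
    have h4 : 1 + (A * Real.sin t / (r - A * Real.cos t)) ^ 2
        = (A ^ 2 + r ^ 2 - 2 * A * r * Real.cos t) / (r - A * Real.cos t) ^ 2 := by
      field_simp
      linear_combination A ^ 2 * h3
    simp only [Pi.div_apply]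
    rw [h4]
    have h5 : A * Real.cos t * (r - A * Real.cos t) - A * Real.sin t * -(A * -Real.sin t)
      = A * r * Real.cos t - A ^ 2 := by linear_combination -A ^ 2 * h3
    rw [h5]
    field_simp
    ring
  · apply Continuous.intervalIntegrable
    apply Continuous.mul continuous_const
    exact Continuous.div (by fun_prop) (by fun_prop) (fun t => (hD t).ne')

lemma mvV_of_ne {σ : ℝ} {a p : ℝ × ℝ} (hp : p ∈ Hp) (h : p.1 ≠ a.1) : p ∈ mvV σ a := ⟨hp, Or.inl h⟩

/-- The two branches differ by `2π` inside and agree outside. -/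
lemma mvTh_jump {a : ℝ × ℝ} (ha : a ∈ Hp) {p : ℝ × ℝ} (hp : p ∈ Hp) (hne : p.1 ≠ a.1) :
    mvTh 1 a p - mvTh (-1) a p = if p.1 < a.1 then 2 * π else 0 := by
  have hV1 : p ∈ mvV 1 a := mvV_of_ne hp hne
  have hV2 : p ∈ mvV (-1) a := mvV_of_ne hp hne
  have c1 := mvx_slice (mvKTh_contDiffOn (σ := 1) (by norm_num) ha).continuousOn hV1
  have c2 := mvx_slice (mvKTh_contDiffOn (σ := -1) (by norm_num) ha).continuousOn hV2
  have : mvTh 1 a p - mvTh (-1) a p = ∫ t in (0:ℝ)..(2 * π),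
      a.1 * ((a.1 - p.1 * Real.cos t) / (a.1 ^ 2 + p.1 ^ 2 - 2 * a.1 * p.1 * Real.cos t)) := by
    unfold mvTh
    rw [show ∀ X Y : ℝ, 1 * (a.1 / 2) * X - -1 * (a.1 / 2) * Y = (a.1 / 2) * (X + Y) by
      intro X Y; ring, ← intervalIntegral.integral_add (c1.intervalIntegrable _ _)
      (c2.intervalIntegrable _ _), ← intervalIntegral.integral_const_mul]
    apply intervalIntegral.integral_congr
    intro t _
    have h1 := mvS_pos ha (q := (p, t)) hp (mvV_ne hV1)
    have h2 := mvD_pos (by norm_num) ha (q := (p, t)) hV1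
    have h3 := mvD_pos (by norm_num) ha (q := (p, t)) hV2
    have h4 : mvS a (p, t) ^ 2 =
      a.1 ^ 2 + p.1 ^ 2 + (p.2 - a.2) ^ 2 - 2 * a.1 * p.1 * Real.cos t :=
      mvS_sq ha (q := (p, t)) hp
    have h5 : a.1 ^ 2 + p.1 ^ 2 - 2 * a.1 * p.1 * Real.cos t =
      (1 * (p.2 - a.2) + mvS a (p, t)) * (-1 * (p.2 - a.2) + mvS a (p, t)) := by
      linear_combination -h4
    simp only at h2 h3 ⊢
    rw [h5]
    simp only [one_mul, neg_mul] at h2 h3 ⊢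
    generalize mvS a (p, t) = S at *
    generalize p.2 - a.2 = z at *
    have h2' : z + S ≠ 0 := h2.ne'
    have h3' : -z + S ≠ 0 := h3.ne'
    have h1' : S ≠ 0 := h1.ne'
    field_simp
    ring
  rw [this]
  rcases lt_or_gt_of_ne hne with h | h
  · rw [if_pos h, mv_ang_lt hp h]
  · rw [if_neg h.not_gt, mv_ang_gt ha h]

/-- The single vortex map. -/
def mvU (a p : ℝ × ℝ) : ℂ :=
  if a.2 ≤ p.2 then Complex.exp (mvTh 1 a p * Complex.I)
  else Complex.exp (mvTh (-1) a p * Complex.I)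

lemma mvU_norm (a p : ℝ × ℝ) : ‖mvU a p‖ = 1 := by
  unfold mvU
  split_ifs <;> exact Complex.norm_exp_ofReal_mul_I _

lemma mvU_exp_eq {a : ℝ × ℝ} (ha : a ∈ Hp) {p : ℝ × ℝ} (hp : p ∈ Hp) (hne : p.1 ≠ a.1) :
    Complex.exp (mvTh 1 a p * Complex.I) = Complex.exp (mvTh (-1) a p * Complex.I) := by
  have h := mvTh_jump ha hp hne
  split_ifs at h
  · rw [show mvTh 1 a p = mvTh (-1) a p + 2 * π by linarith]
    push_cast
    rw [add_mul, Complex.exp_add, Complex.exp_two_pi_mul_I, mul_one]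
  · rw [sub_eq_zero.1 h]

lemma mvU_eq {σ : ℝ} (hσ : σ ^ 2 = 1) {a : ℝ × ℝ} (ha : a ∈ Hp) {p : ℝ × ℝ} (hp : p ∈ mvV σ a) :
    mvU a p = Complex.exp (mvTh σ a p * Complex.I) := by
  unfold mvU
  have hσ2 : σ = 1 ∨ σ = -1 := by
    have : (σ - 1) * (σ + 1) = 0 := by linear_combination hσ
    rcases mul_eq_zero.1 this with h | h
    · left; linarith
    · right; linarith
  rcases hσ2 with rfl | rfl
  · split_ifs with h
    · rfl
    · have : p.1 ≠ a.1 := hp.2.resolve_right (by linarith)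
      exact (mvU_exp_eq ha hp.1 this).symm
  · split_ifs with h
    · have : p.1 ≠ a.1 := hp.2.resolve_right (by linarith)
      exact (mvU_exp_eq ha hp.1 this)
    · rfl

lemma mvV_cover {a p : ℝ × ℝ} (hp : p ∈ Hp \ {a}) : ∃ σ : ℝ, σ ^ 2 = 1 ∧ p ∈ mvV σ a := by
  rcases lt_trichotomy p.2 a.2 with h | h | h
  · exact ⟨-1, by norm_num, hp.1, Or.inr (by linarith)⟩
  · exact ⟨1, by norm_num, hp.1, Or.inl fun h' => hp.2 (Prod.ext h' h)⟩
  · exact ⟨1, by norm_num, hp.1, Or.inr (by linarith)⟩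

/-- The differential of a unimodular map with current `(P, Q)`. -/
def mvDC (u : ℂ) (P Q : ℝ) : ℝ × ℝ →L[ℝ] ℂ :=
  (u * Complex.I) • (Complex.ofRealCLM.comp (mvL P Q))

lemma mvDC_apply (u : ℂ) (P Q : ℝ) (v : ℝ × ℝ) :
    mvDC u P Q v = u * Complex.I * ((P * v.1 + Q * v.2 : ℝ) : ℂ) := by
  simp [mvDC, mvL]
  ring

lemma mvU_hasFDerivAt {a : ℝ × ℝ} (ha : a ∈ Hp) {p : ℝ × ℝ} (hp : p ∈ Hp \ {a}) :
    HasFDerivAt (mvU a) (mvDC (mvU a p) (mvJR a p) (mvJZ a p)) p := by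
  obtain ⟨σ, hσ, hV⟩ := mvV_cover hp
  have h1 : mvU a =ᶠ[𝓝 p] fun q => Complex.exp (mvTh σ a q * Complex.I) := by
    filter_upwards [(mvV_open σ a).mem_nhds hV] with q hq
    exact mvU_eq hσ ha hq
  refine HasFDerivAt.congr_of_eventuallyEq ?_ h1
  have h2 := mvTh_hasFDerivAt hσ ha hV
  have h3 := ((Complex.ofRealCLM.hasFDerivAt.comp p h2).mul_const Complex.I).cexp
  refine h3.congr_fderiv ?_
  apply ContinuousLinearMap.ext
  intro v
  rw [mvDC_apply, mvU_eq hσ ha hV]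
  simp [mvL]
  ring

lemma mvU_contDiffOn {a : ℝ × ℝ} (ha : a ∈ Hp) :
    ContDiffOn ℝ (⊤ : ℕ∞) (mvU a) (Hp \ {a}) := by
  intro p hp
  obtain ⟨σ, hσ, hV⟩ := mvV_cover hp
  apply ContDiffAt.contDiffWithinAt
  have h1 : mvU a =ᶠ[𝓝 p] fun q => Complex.exp (mvTh σ a q * Complex.I) := by
    filter_upwards [(mvV_open σ a).mem_nhds hV] with q hq
    exact mvU_eq hσ ha hq
  refine ContDiffAt.congr_of_eventuallyEq ?_ h1
  have h2 := (mvTh_contDiffOn hσ ha).contDiffAt ((mvV_open σ a).mem_nhds hV)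
  exact ((Complex.ofRealCLM.contDiff.contDiffAt.comp p h2).mul contDiffAt_const).cexp

/-! ### Bounds -/

/-- Distance to `a`. -/
def mvd (a p : ℝ × ℝ) : ℝ := Real.sqrt ((p.1 - a.1) ^ 2 + (p.2 - a.2) ^ 2)

lemma mvd_pos {a p : ℝ × ℝ} (h : p.2 ≠ a.2) : 0 < mvd a p := by
  have := sub_ne_zero.2 h
  exact Real.sqrt_pos.2 (by positivity)

lemma mvd_le_S {a p : ℝ × ℝ} (ha : a ∈ Hp) (hp : p ∈ Hp) (t : ℝ) : mvd a p ≤ mvS a (p, t) :=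
  Real.sqrt_le_sqrt (mvSS_ge ha (q := (p, t)) hp)

lemma mv_num_le {a p : ℝ × ℝ} (ha : a ∈ Hp) (hp : p ∈ Hp) (t : ℝ) :
    |a.1 - p.1 * Real.cos t| ≤ (2 + p.1 / a.1) * mvS a (p, t) := by
  have h1 : 0 < a.1 := ha
  have h2 : 0 < p.1 := hp
  have hS : 0 ≤ mvS a (p, t) := Real.sqrt_nonneg _
  have hq : mvS a (p, t) ^ 2 = (p.1 - a.1) ^ 2 + (p.2 - a.2) ^ 2
      + 2 * a.1 * p.1 * (1 - Real.cos t) := by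
    rw [mvS_sq ha (q := (p, t)) hp, mvSS_eq]
  generalize mvS a (p, t) = S at *
  have c1 : 0 ≤ 1 - Real.cos t := by linarith [Real.cos_le_one t]
  have c2 : 1 - Real.cos t ≤ 2 := by linarith [Real.neg_one_le_cos t]
  generalize hc : 1 - Real.cos t = c at *
  have e1 : |p.1 - a.1| ≤ S := by
    apply abs_le_of_sq_le_sq _ hS
    have := mul_nonneg (mul_pos h1 h2).le c1
    nlinarith [sq_nonneg (p.2 - a.2)]
  have e2 : p.1 * c ≤ (1 + p.1 / a.1) * S := by
    have hk : 0 ≤ p.1 / a.1 := by positivity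
    apply le_of_sq_le_sq _ (by positivity)
    have : (p.1 * c) ^ 2 ≤ (p.1 / a.1) * S ^ 2 := by
      have g1 : (p.1 / a.1) * (2 * a.1 * p.1 * c) = 2 * p.1 ^ 2 * c := by field_simp
      have g2 : (p.1 / a.1) * (2 * a.1 * p.1 * c) ≤ (p.1 / a.1) * S ^ 2 := by
        apply mul_le_mul_of_nonneg_left _ hk
        nlinarith [sq_nonneg (p.2 - a.2), sq_nonneg (p.1 - a.1)]
      have g3 : (p.1 * c) ^ 2 ≤ 2 * p.1 ^ 2 * c := by
        have := mul_nonneg (mul_nonneg (sq_nonneg p.1) c1) (sub_nonneg.2 c2)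
        nlinarith
      linarith
    refine this.trans ?_
    rw [mul_pow]
    apply mul_le_mul_of_nonneg_right _ (sq_nonneg S)
    nlinarith
  have e3 : a.1 - p.1 * Real.cos t = -(p.1 - a.1) + p.1 * c := by rw [← hc]; ring
  rw [e3]
  calc |-(p.1 - a.1) + p.1 * c| ≤ |-(p.1 - a.1)| + |p.1 * c| := abs_add_le _ _
    _ = |p.1 - a.1| + p.1 * c := by rw [abs_neg, abs_of_nonneg (mul_nonneg h2.le c1)]
    _ ≤ S + (1 + p.1 / a.1) * S := add_le_add e1 e2
    _ = _ := by ring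

/-- The coefficient in the angular bound. -/
def mvm (a p : ℝ × ℝ) : ℝ := 2 * Real.sqrt (a.1 * p.1) / π

lemma mvm_pos {a p : ℝ × ℝ} (ha : a ∈ Hp) (hp : p ∈ Hp) : 0 < mvm a p := by
  have := Real.sqrt_pos.2 (mul_pos (show 0 < a.1 from ha) (show 0 < p.1 from hp))
  have := Real.pi_pos
  unfold mvm
  positivity

lemma mv_invS_cont {a p : ℝ × ℝ} (ha : a ∈ Hp) (hp : p ∈ Hp) (hne : p.2 ≠ a.2) :
    Continuous fun t : ℝ => 1 / mvS a (p, t) ^ 2 := by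
  refine Continuous.div continuous_const ((mvS_cont p).pow 2) fun t => ?_
  have := mvS_pos ha (q := (p, t)) hp (fun h => hne (by rw [show p = a from h]))
  positivity

lemma mv_int_le {a p : ℝ × ℝ} (ha : a ∈ Hp) (hp : p ∈ Hp) (hne : p.2 ≠ a.2) :
    ∫ t in (0:ℝ)..(2 * π), 1 / mvS a (p, t) ^ 2 ≤ (π / mvm a p) / mvd a p := by
  have hd := mvd_pos hne
  have hm := mvm_pos ha hp
  have hper : Function.Periodic (fun t : ℝ => 1 / mvS a (p, t) ^ 2) (2 * π) := by
    intro t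
    simp [mvS, mvSS]
  have h1 := hper.intervalIntegral_add_eq 0 (-π)
  rw [zero_add, show -π + 2 * π = π by ring] at h1
  rw [h1]
  have hD : ∀ t : ℝ, 0 < mvd a p ^ 2 + mvm a p ^ 2 * t ^ 2 := fun t => by positivity
  have hc : Continuous fun t : ℝ => 1 / (mvd a p ^ 2 + mvm a p ^ 2 * t ^ 2) :=
    Continuous.div continuous_const (by fun_prop) fun t => (hD t).ne'
  calc ∫ t in (-π)..π, 1 / mvS a (p, t) ^ 2
      ≤ ∫ t in (-π)..π, 1 / (mvd a p ^ 2 + mvm a p ^ 2 * t ^ 2) := by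
        apply intervalIntegral.integral_mono_on (by linarith [Real.pi_pos])
          ((mv_invS_cont ha hp hne).intervalIntegrable _ _) (hc.intervalIntegrable _ _)
        intro t ht
        apply one_div_le_one_div_of_le (hD t)
        rw [mvS_sq ha (q := (p, t)) hp, mvSS_eq]
        have hcos := Real.cos_le_one_sub_mul_cos_sq (x := t) (abs_le.2 ht)
        have hap := mul_pos (show 0 < a.1 from ha) (show 0 < p.1 from hp)
        have e1 : mvd a p ^ 2 = (p.1 - a.1) ^ 2 + (p.2 - a.2) ^ 2 :=
          Real.sq_sqrt (by positivity)
        have e2 : mvm a p ^ 2 = 4 * (a.1 * p.1) / π ^ 2 := by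
          unfold mvm
          rw [div_pow, mul_pow, Real.sq_sqrt hap.le]
          norm_num
        rw [e1, e2]
        have e3 : 4 * (a.1 * p.1) / π ^ 2 * t ^ 2 = 2 * (a.1 * p.1) * (2 / π ^ 2 * t ^ 2) := by
          ring
        simp only
        rw [e3]
        nlinarith
    _ = Real.arctan (mvm a p * π / mvd a p) / (mvm a p * mvd a p)
        - Real.arctan (mvm a p * (-π) / mvd a p) / (mvm a p * mvd a p) := by
        rw [intervalIntegral.integral_eq_sub_of_hasDerivAt
          (f := fun t => Real.arctan (mvm a p * t / mvd a p) / (mvm a p * mvd a p))]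
        · intro t _
          have h := ((((hasDerivAt_id t).const_mul (mvm a p)).div_const (mvd a p)).arctan).div_const
            (mvm a p * mvd a p)
          refine h.congr_deriv ?_
          have := hD t
          simp only [id]
          field_simp
        · exact hc.intervalIntegrable _ _
    _ ≤ _ := by
        rw [mul_neg, neg_div, Real.arctan_neg, neg_div, sub_neg_eq_add, ← add_div, div_div]
        apply div_le_div_of_nonneg_right _ (by positivity)
        linarith [Real.arctan_lt_pi_div_two (mvm a p * π / mvd a p)]

lemma mvJR_le {a p : ℝ × ℝ} (ha : a ∈ Hp) (hp : p ∈ Hp) (hne : p.2 ≠ a.2) :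
    |mvJR a p| ≤ (a.1 / 2 * (π / mvm a p)) / mvd a p := by
  have h1 : 0 < a.1 := ha
  unfold mvJR
  rw [abs_mul, abs_neg, abs_of_pos (half_pos h1), mul_div_assoc]
  apply mul_le_mul_of_nonneg_left _ (half_pos h1).le
  refine le_trans ?_ (mv_int_le ha hp hne)
  rw [← Real.norm_eq_abs]
  apply intervalIntegral.norm_integral_le_of_norm_le (by linarith [Real.pi_pos])
  · refine Eventually.of_forall fun t _ => ?_
    have hS := mvS_pos ha (q := (p, t)) hp (fun h => hne (by rw [show p = a from h]))
    have hz : |p.2 - a.2| ≤ mvS a (p, t) := by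
      refine le_trans ?_ (mvd_le_S ha hp t)
      apply Real.le_sqrt_of_sq_le
      rw [sq_abs]
      nlinarith [sq_nonneg (p.1 - a.1)]
    rw [Real.norm_eq_abs, abs_div, abs_mul, abs_of_pos (pow_pos hS 3), div_le_div_iff₀ (by positivity)
      (by positivity)]
    have := Real.abs_cos_le_one t
    have h2 : |Real.cos t| * |p.2 - a.2| ≤ 1 * mvS a (p, t) :=
      mul_le_mul this hz (abs_nonneg _) zero_le_one
    nlinarith [mul_le_mul_of_nonneg_right h2 (sq_nonneg (mvS a (p, t)))]
  · exact (mv_invS_cont ha hp hne).intervalIntegrable _ _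

lemma mvJZ_le {a p : ℝ × ℝ} (ha : a ∈ Hp) (hp : p ∈ Hp) (hne : p.2 ≠ a.2) :
    |mvJZ a p| ≤ (a.1 / 2 * ((2 + p.1 / a.1) * (π / mvm a p))) / mvd a p := by
  have h1 : 0 < a.1 := ha
  have h2 : 0 < p.1 := hp
  unfold mvJZ
  rw [abs_mul, abs_neg, abs_of_pos (half_pos h1), mul_div_assoc]
  apply mul_le_mul_of_nonneg_left _ (half_pos h1).le
  rw [mul_div_assoc]
  refine le_trans ?_ (mul_le_mul_of_nonneg_left (mv_int_le ha hp hne) (by positivity))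
  rw [← intervalIntegral.integral_const_mul]
  rw [← Real.norm_eq_abs]
  apply intervalIntegral.norm_integral_le_of_norm_le (by linarith [Real.pi_pos])
  · refine Eventually.of_forall fun t _ => ?_
    have hS := mvS_pos ha (q := (p, t)) hp (fun h => hne (by rw [show p = a from h]))
    have hz := mv_num_le ha hp t
    rw [Real.norm_eq_abs, abs_div, abs_of_pos (pow_pos hS 3), mul_one_div,
      div_le_div_iff₀ (by positivity) (by positivity)]
    nlinarith [mul_le_mul_of_nonneg_right hz (sq_nonneg (mvS a (p, t)))]
  · exact ((mv_invS_cont ha hp hne).const_mul _).intervalIntegrable _ _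

lemma mvTh_le {σ : ℝ} (hσ : |σ| = 1) {a p : ℝ × ℝ} (ha : a ∈ Hp) (hp : p ∈ Hp) (hne : p.2 ≠ a.2)
    (hs : 0 ≤ σ * (p.2 - a.2)) :
    |mvTh σ a p| ≤ (a.1 / 2 * ((2 + p.1 / a.1) * (2 * π))) / mvd a p := by
  have h1 : 0 < a.1 := ha
  have h2 : 0 < p.1 := hp
  have hd := mvd_pos hne
  unfold mvTh
  rw [abs_mul, abs_mul, hσ, one_mul, abs_of_pos (half_pos h1), mul_div_assoc]
  apply mul_le_mul_of_nonneg_left _ (half_pos h1).le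
  have := intervalIntegral.norm_integral_le_of_norm_le_const (a := 0) (b := 2 * π)
    (C := (2 + p.1 / a.1) / mvd a p)
    (f := fun t => (a.1 - p.1 * Real.cos t) / (mvS a (p, t) * (σ * (p.2 - a.2) + mvS a (p, t)))) ?_
  · refine this.trans (le_of_eq ?_)
    rw [sub_zero, abs_of_pos Real.two_pi_pos]
    ring
  · intro t _
    have hS := mvS_pos ha (q := (p, t)) hp (fun h => hne (by rw [show p = a from h]))
    have hz := mv_num_le ha hp t
    have hdS := mvd_le_S ha hp t
    rw [Real.norm_eq_abs, abs_div, abs_of_pos (by positivity : 0 < mvS a (p, t) * (σ * (p.2 - a.2) + mvS a (p, t)))]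
    calc |a.1 - p.1 * Real.cos t| / (mvS a (p, t) * (σ * (p.2 - a.2) + mvS a (p, t)))
        ≤ ((2 + p.1 / a.1) * mvS a (p, t)) / (mvS a (p, t) * mvd a p) := by
          apply div_le_div₀ (by positivity) hz (by positivity)
          apply mul_le_mul_of_nonneg_left _ hS.le
          linarith
      _ = _ := by field_simp

lemma mvA_le {a p : ℝ × ℝ} (ha : a ∈ Hp) (hp : p ∈ Hp) (hne : p.2 ≠ a.2) :
    |p.1 * Avec a p| ≤ (p.1 * (a.1 / 2 * (2 * π))) / mvd a p := by
  have h1 : 0 < a.1 := ha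
  have h2 : 0 < p.1 := hp
  have hd := mvd_pos hne
  unfold Avec
  rw [abs_mul, abs_mul, abs_of_pos (half_pos h1), abs_of_pos h2, mul_div_assoc, mul_div_assoc]
  apply mul_le_mul_of_nonneg_left _ h2.le
  apply mul_le_mul_of_nonneg_left _ (half_pos h1).le
  have := intervalIntegral.norm_integral_le_of_norm_le_const (a := 0) (b := 2 * π)
    (C := 1 / mvd a p)
    (f := fun t => Real.cos t /
      Real.sqrt (a.1 ^ 2 + p.1 ^ 2 + (p.2 - a.2) ^ 2 - 2 * a.1 * p.1 * Real.cos t)) ?_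
  · refine this.trans (le_of_eq ?_)
    rw [sub_zero, abs_of_pos Real.two_pi_pos]
    ring
  · intro t _
    have hdS := mvd_le_S ha hp t
    change mvd a p ≤ Real.sqrt (a.1 ^ 2 + p.1 ^ 2 + (p.2 - a.2) ^ 2 - 2 * a.1 * p.1 * Real.cos t)
      at hdS
    rw [Real.norm_eq_abs, abs_div, abs_of_nonneg (Real.sqrt_nonneg _)]
    exact div_le_div₀ zero_le_one (Real.abs_cos_le_one t) hd hdS

/-! ### Local integrability -/

lemma mv_sqrt_int (c R : ℝ) : IntegrableOn (fun x : ℝ => (Real.sqrt |x - c|)⁻¹) (Set.Icc (-R) R) := by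
  have h0 : ∀ b : ℝ, 0 ≤ b → IntervalIntegrable (fun x : ℝ => (Real.sqrt |x|)⁻¹) volume 0 b := by
    intro b hb
    have := intervalIntegral.intervalIntegrable_rpow' (a := 0) (b := b) (r := -(1/2)) (by norm_num)
    refine this.congr ?_
    intro x hx
    rw [Set.uIoc_of_le hb] at hx
    simp only
    rw [abs_of_pos hx.1, Real.sqrt_eq_rpow, Real.rpow_neg hx.1.le]
  have h1 : ∀ b : ℝ, IntervalIntegrable (fun x : ℝ => (Real.sqrt |x|)⁻¹) volume 0 b := by
    intro b
    rcases le_total 0 b with hb | hb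
    · exact h0 b hb
    · have := h0 (-b) (by linarith)
      rw [IntervalIntegrable.iff_comp_neg (by simp)] at this
      simpa using this
  have h2 : IntervalIntegrable (fun x : ℝ => (Real.sqrt |x - c|)⁻¹) volume (-R) R := by
    have := ((h1 (-R - c)).symm.trans (h1 (R - c))).comp_sub_right c
    simpa using this
  rcases le_or_gt (-R) R with h | h
  · exact (intervalIntegrable_iff_integrableOn_Icc_of_le h).1 h2
  · rw [Set.Icc_eq_empty (not_le.2 h)]; exact integrableOn_empty

/-- The half plane minus the cross through `a`. -/
def mvE (a : ℝ × ℝ) : Set (ℝ × ℝ) := {p | p ∈ Hp ∧ p.1 ≠ a.1 ∧ p.2 ≠ a.2}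

lemma mvE_open (a : ℝ × ℝ) : IsOpen (mvE a) :=
  mvHp_open.inter ((isOpen_ne_fun continuous_fst continuous_const).inter
    (isOpen_ne_fun continuous_snd continuous_const))

lemma mv_ae_fst (c : ℝ) : ∀ᵐ p : ℝ × ℝ, p.1 ≠ c := by
  have h : ∀ᵐ x : ℝ, x ≠ c := by simp [ae_iff]
  exact (Measure.quasiMeasurePreserving_fst (μ := (volume : Measure ℝ))
    (ν := (volume : Measure ℝ))).ae h

lemma mv_ae_snd (c : ℝ) : ∀ᵐ p : ℝ × ℝ, p.2 ≠ c := by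
  have h : ∀ᵐ x : ℝ, x ≠ c := by simp [ae_iff]
  exact (Measure.quasiMeasurePreserving_snd (μ := (volume : Measure ℝ))
    (ν := (volume : Measure ℝ))).ae h

lemma mv_intOn {a : ℝ × ℝ} {f B : ℝ × ℝ → ℝ} (hf : ContinuousOn f (mvE a))
    (hB : ContinuousOn B Hp) (hle : ∀ p ∈ mvE a, |f p| ≤ B p / mvd a p)
    {K : Set (ℝ × ℝ)} (hK : IsCompact K) (hKH : K ⊆ Hp) : IntegrableOn f K := by
  obtain ⟨M, hM⟩ := hK.exists_bound_of_continuousOn (hB.mono hKH)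
  obtain ⟨R, hR⟩ := hK.isBounded.subset_closedBall 0
  have hsub : K ⊆ Set.Icc (-R) R ×ˢ Set.Icc (-R) R := by
    intro p hp
    have := hR hp
    rw [mem_closedBall, dist_zero_right, Prod.norm_def, max_le_iff] at this
    exact ⟨abs_le.1 this.1, abs_le.1 this.2⟩
  have hg : IntegrableOn (fun p : ℝ × ℝ => |M| * ((Real.sqrt |p.1 - a.1|)⁻¹ * (Real.sqrt |p.2 - a.2|)⁻¹))
      K := by
    apply IntegrableOn.mono_set _ hsub
    apply Integrable.const_mul
    have := (mv_sqrt_int a.1 R).mul_prod (mv_sqrt_int a.2 R)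
    rw [Measure.prod_restrict] at this
    exact this
  have hae : ∀ᵐ p ∂(volume.restrict K), p ∈ mvE a := by
    filter_upwards [ae_restrict_mem hK.measurableSet, ae_restrict_of_ae (mv_ae_fst a.1),
      ae_restrict_of_ae (mv_ae_snd a.2)] with p h1 h2 h3
    exact ⟨hKH h1, h2, h3⟩
  refine Integrable.mono' hg ?_ ?_
  · have h1 : AEStronglyMeasurable f (volume.restrict (K ∩ mvE a)) :=
      (hf.mono Set.inter_subset_right).aestronglyMeasurable
        (hK.measurableSet.inter (mvE_open a).measurableSet)
    have h2 : volume.restrict (K ∩ mvE a) = volume.restrict K := by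
      rw [Set.inter_comm, ← Measure.restrict_restrict (mvE_open a).measurableSet]
      exact Measure.restrict_eq_self_of_ae_mem hae
    rwa [h2] at h1
  · filter_upwards [hae, ae_restrict_mem hK.measurableSet] with p hp hpK
    rw [Real.norm_eq_abs]
    refine (hle p hp).trans ?_
    have hx : 0 < |p.1 - a.1| := abs_pos.2 (sub_ne_zero.2 hp.2.1)
    have hz : 0 < |p.2 - a.2| := abs_pos.2 (sub_ne_zero.2 hp.2.2)
    rw [← mul_inv, ← Real.sqrt_mul hx.le, ← div_eq_mul_inv]
    apply div_le_div₀ (abs_nonneg M) _ (Real.sqrt_pos.2 (mul_pos hx hz))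
    · apply Real.sqrt_le_sqrt
      rw [← sq_abs (p.1 - a.1), ← sq_abs (p.2 - a.2)]
      nlinarith [sq_nonneg (|p.1 - a.1| - |p.2 - a.2|)]
    · have := hM p hpK
      rw [Real.norm_eq_abs] at this
      exact (le_abs_self _).trans (this.trans (le_abs_self _))

lemma mvm_inv_cont {a : ℝ × ℝ} (ha : a ∈ Hp) : ContinuousOn (fun p => π / mvm a p) Hp := by
  apply ContinuousOn.div continuousOn_const
  · unfold mvm
    exact Continuous.continuousOn (by fun_prop)
  · intro p hp
    exact (mvm_pos ha hp).ne'

lemma mvE_sub (a : ℝ × ℝ) : mvE a ⊆ Hp \ {a} := fun _ hp => ⟨hp.1, fun h => hp.2.1 (by rw [h])⟩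

lemma mvJR_intOn {a : ℝ × ℝ} (ha : a ∈ Hp) {K : Set (ℝ × ℝ)} (hK : IsCompact K) (hKH : K ⊆ Hp) :
    IntegrableOn (mvJR a) K :=
  mv_intOn ((mvJR_contDiffOn ha).continuousOn.mono (mvE_sub a))
    (continuousOn_const.mul (mvm_inv_cont ha)) (fun _ hp => mvJR_le ha hp.1 hp.2.2) hK hKH

lemma mvJZ_intOn {a : ℝ × ℝ} (ha : a ∈ Hp) {K : Set (ℝ × ℝ)} (hK : IsCompact K) (hKH : K ⊆ Hp) :
    IntegrableOn (mvJZ a) K :=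
  mv_intOn ((mvJZ_contDiffOn ha).continuousOn.mono (mvE_sub a))
    (continuousOn_const.mul ((Continuous.continuousOn (by fun_prop)).mul (mvm_inv_cont ha)))
    (fun _ hp => mvJZ_le ha hp.1 hp.2.2) hK hKH

lemma mvTh_intOn {a : ℝ × ℝ} (ha : a ∈ Hp) {K : Set (ℝ × ℝ)} (hK : IsCompact K) (hKH : K ⊆ Hp) :
    IntegrableOn (fun p => if a.2 ≤ p.2 then mvTh 1 a p else mvTh (-1) a p) K := by
  refine mv_intOn (a := a) (B := fun p => a.1 / 2 * ((2 + p.1 / a.1) * (2 * π))) ?_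
    (Continuous.continuousOn (by fun_prop)) ?_ hK hKH
  · intro p hp
    apply ContinuousAt.continuousWithinAt
    rcases lt_or_gt_of_ne hp.2.2 with h | h
    · have : (fun p : ℝ × ℝ => if a.2 ≤ p.2 then mvTh 1 a p else mvTh (-1) a p) =ᶠ[𝓝 p]
          mvTh (-1) a := by
        filter_upwards [(isOpen_lt continuous_snd continuous_const).mem_nhds h] with q hq
        rw [if_neg (not_le.2 hq)]
      refine ContinuousAt.congr ?_ this.symm
      exact (mvTh_contDiffOn (by norm_num) ha).continuousOn.continuousAt
        ((mvV_open (-1) a).mem_nhds (mvV_of_ne hp.1 hp.2.1))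
    · have : (fun p : ℝ × ℝ => if a.2 ≤ p.2 then mvTh 1 a p else mvTh (-1) a p) =ᶠ[𝓝 p]
          mvTh 1 a := by
        filter_upwards [(isOpen_lt continuous_const continuous_snd).mem_nhds h] with q hq
        rw [if_pos (le_of_lt hq)]
      refine ContinuousAt.congr ?_ this.symm
      exact (mvTh_contDiffOn (by norm_num) ha).continuousOn.continuousAt
        ((mvV_open 1 a).mem_nhds (mvV_of_ne hp.1 hp.2.1))
  · intro p hp
    split_ifs with h
    · exact mvTh_le (by norm_num) ha hp.1 hp.2.2 (by linarith)
    · exact mvTh_le (by norm_num) ha hp.1 hp.2.2 (by linarith)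

lemma mvA_intOn {a : ℝ × ℝ} (ha : a ∈ Hp) {K : Set (ℝ × ℝ)} (hK : IsCompact K) (hKH : K ⊆ Hp) :
    IntegrableOn (fun p : ℝ × ℝ => p.1 * Avec a p) K := by
  refine mv_intOn (a := a) (B := fun p => p.1 * (a.1 / 2 * (2 * π))) ?_
    (Continuous.continuousOn (by fun_prop)) (fun _ hp => mvA_le ha hp.1 hp.2.2) hK hKH
  intro p hp
  exact (mvrA_hasFDerivAt ha (mvE_sub a hp)).continuousAt.continuousWithinAt

/-! ### Green's identity with a point singularity -/

lemma mv_pdR_contDiff {φ : ℝ × ℝ → ℝ} (hφ : ContDiff ℝ (⊤ : ℕ∞) φ) :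
    ContDiff ℝ (⊤ : ℕ∞) (pdRr φ) :=
  (hφ.fderiv_right (m := (⊤ : ℕ∞)) (by norm_cast)).clm_apply contDiff_const

lemma mv_pdZ_contDiff {φ : ℝ × ℝ → ℝ} (hφ : ContDiff ℝ (⊤ : ℕ∞) φ) :
    ContDiff ℝ (⊤ : ℕ∞) (pdZr φ) :=
  (hφ.fderiv_right (m := (⊤ : ℕ∞)) (by norm_cast)).clm_apply contDiff_const

lemma mv_pdR_zero {φ : ℝ × ℝ → ℝ} {p : ℝ × ℝ} (hp : p ∉ tsupport φ) : pdRr φ p = 0 := by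
  have : fderiv ℝ φ p = 0 := by
    by_contra h
    exact hp (support_fderiv_subset ℝ h)
  simp [pdRr, this]

lemma mv_pdZ_zero {φ : ℝ × ℝ → ℝ} {p : ℝ × ℝ} (hp : p ∉ tsupport φ) : pdZr φ p = 0 := by
  have : fderiv ℝ φ p = 0 := by
    by_contra h
    exact hp (support_fderiv_subset ℝ h)
  simp [pdZr, this]

lemma mv_pdR_tsupport (φ : ℝ × ℝ → ℝ) : tsupport (pdRr φ) ⊆ tsupport φ := by
  apply closure_minimal _ (isClosed_tsupport φ)
  intro p hp
  by_contra h
  exact hp (mv_pdR_zero h)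

lemma mv_pdZ_tsupport (φ : ℝ × ℝ → ℝ) : tsupport (pdZr φ) ⊆ tsupport φ := by
  apply closure_minimal _ (isClosed_tsupport φ)
  intro p hp
  by_contra h
  exact hp (mv_pdZ_zero h)

lemma mv_pd_symm {φ : ℝ × ℝ → ℝ} (hφ : ContDiff ℝ (⊤ : ℕ∞) φ) (p : ℝ × ℝ) :
    pdZr (pdRr φ) p = pdRr (pdZr φ) p := by
  have hs := (hφ.contDiffAt (x := p)).isSymmSndFDerivAt
    (by simp only [minSmoothness_of_isRCLikeNormedField]; exact WithTop.coe_le_coe.2 (show (2 : ℕ∞) ≤ ⊤ from le_top))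
  have hd : DifferentiableAt ℝ (fderiv ℝ φ) p :=
    ((hφ.fderiv_right (m := 1) (by norm_cast)).differentiable (by norm_num)) p
  have h1 : ∀ v w : ℝ × ℝ, fderiv ℝ (fun q => fderiv ℝ φ q v) p w = fderiv ℝ (fderiv ℝ φ) p w v := by
    intro v w
    have := (hd.hasFDerivAt.clm_apply (hasFDerivAt_const v p)).fderiv
    rw [this]
    simp
  change fderiv ℝ (fun q => fderiv ℝ φ q (1, 0)) p (0, 1)
    = fderiv ℝ (fun q => fderiv ℝ φ q (0, 1)) p (1, 0)
  rw [h1, h1]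
  exact hs _ _

lemma mv_hasDerivAt_Z {f : ℝ × ℝ → ℝ} {L : ℝ × ℝ →L[ℝ] ℝ} {r z : ℝ} (h : HasFDerivAt f L (r, z)) :
    HasDerivAt (fun s => f (r, s)) (L (0, 1)) z := by
  have hc : HasDerivAt (fun s : ℝ => ((r, s) : ℝ × ℝ)) (0, 1) z :=
    (hasDerivAt_const z r).prodMk (hasDerivAt_id z)
  exact h.comp_hasDerivAt (f := fun s : ℝ => ((r, s) : ℝ × ℝ)) z hc

lemma mv_hasDerivAt_R {f : ℝ × ℝ → ℝ} {L : ℝ × ℝ →L[ℝ] ℝ} {r z : ℝ} (h : HasFDerivAt f L (r, z)) :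
    HasDerivAt (fun s => f (s, z)) (L (1, 0)) r := by
  have hc : HasDerivAt (fun s : ℝ => ((s, z) : ℝ × ℝ)) (1, 0) r :=
    (hasDerivAt_id r).prodMk (hasDerivAt_const r z)
  exact h.comp_hasDerivAt (f := fun s : ℝ => ((s, z) : ℝ × ℝ)) r hc

lemma mv_pdZ_hasDerivAt {φ : ℝ × ℝ → ℝ} (hφ : ContDiff ℝ (⊤ : ℕ∞) φ) (r z : ℝ) :
    HasDerivAt (fun s => φ (r, s)) (pdZr φ (r, z)) z :=
  mv_hasDerivAt_Z ((hφ.differentiable (by norm_num)) (r, z)).hasFDerivAt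

lemma mv_pdR_hasDerivAt {φ : ℝ × ℝ → ℝ} (hφ : ContDiff ℝ (⊤ : ℕ∞) φ) (r z : ℝ) :
    HasDerivAt (fun s => φ (s, z)) (pdRr φ (r, z)) r :=
  mv_hasDerivAt_R ((hφ.differentiable (by norm_num)) (r, z)).hasFDerivAt

lemma mv_mul_int {K : Set (ℝ × ℝ)} (hK : IsCompact K) {g ψ : ℝ × ℝ → ℝ} (hg : IntegrableOn g K)
    (hψ : Continuous ψ) (hs : ∀ p ∉ K, ψ p = 0) : Integrable (fun p => g p * ψ p) := by
  rw [← integrableOn_iff_integrable_of_support_subset (s := K)]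
  · exact hg.mul_continuousOn hψ.continuousOn hK
  · intro p hp
    by_contra h
    exact hp (by simp [hs p h])

/-- Far away in `z`, a function supported in a compact set vanishes. -/
lemma mv_ev_Z {K : Set (ℝ × ℝ)} (hK : IsCompact K) {ψ : ℝ × ℝ → ℝ} (hs : ∀ p ∉ K, ψ p = 0) (r : ℝ) :
    (∀ᶠ z in atTop, ψ (r, z) = 0) ∧ (∀ᶠ z in atBot, ψ (r, z) = 0) := by
  obtain ⟨R, hR⟩ := hK.isBounded.subset_closedBall 0
  have key : ∀ z : ℝ, R < |z| → ψ (r, z) = 0 := by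
    intro z hz
    apply hs
    intro h
    have := hR h
    rw [mem_closedBall, dist_zero_right, Prod.norm_def, max_le_iff] at this
    exact absurd this.2 (not_le.2 hz)
  constructor
  · filter_upwards [eventually_gt_atTop R] with z hz
    exact key z (lt_of_lt_of_le hz (le_abs_self z))
  · filter_upwards [eventually_lt_atBot (-R)] with z hz
    exact key z (by linarith [neg_abs_le z])

lemma mv_ev_R {K : Set (ℝ × ℝ)} (hKH : K ⊆ Hp) {ψ : ℝ × ℝ → ℝ} (hs : ∀ p ∉ K, ψ p = 0)
    (z : ℝ) : ∀ᶠ r in atBot, ψ (r, z) = 0 := by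
  filter_upwards [eventually_lt_atBot 0] with r hr
  apply hs
  intro h
  exact absurd (show 0 < r from hKH h) (by linarith)

lemma mv_green {a : ℝ × ℝ} (ha : a ∈ Hp) {f₁ f₂ P Q : ℝ × ℝ → ℝ} {κ : ℝ}
    (h1 : ∀ p ∈ Hp, p ≠ a → a.2 ≤ p.2 → HasFDerivAt f₁ (mvL (P p) (Q p)) p)
    (h2 : ∀ p ∈ Hp, p ≠ a → p.2 ≤ a.2 → HasFDerivAt f₂ (mvL (P p) (Q p)) p)
    (hP : ∀ K : Set (ℝ × ℝ), IsCompact K → K ⊆ Hp → IntegrableOn P K)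
    (hQ : ∀ K : Set (ℝ × ℝ), IsCompact K → K ⊆ Hp → IntegrableOn Q K)
    (hF : ∀ K : Set (ℝ × ℝ), IsCompact K → K ⊆ Hp →
      IntegrableOn (fun p => if a.2 ≤ p.2 then f₁ p else f₂ p) K)
    (hj : ∀ r : ℝ, 0 < r → r ≠ a.1 → f₁ (r, a.2) - f₂ (r, a.2) = if r < a.1 then κ else 0)
    {φ : ℝ × ℝ → ℝ} (hφ : ContDiff ℝ (⊤ : ℕ∞) φ) (hc : HasCompactSupport φ)
    (hs : tsupport φ ⊆ Hp) :
    Integrable (fun p => Q p * pdRr φ p) ∧ Integrable (fun p => P p * pdZr φ p) ∧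
    ∫ p, (Q p * pdRr φ p - P p * pdZr φ p) = -(κ * φ a) := by
  set F : ℝ × ℝ → ℝ := fun p => if a.2 ≤ p.2 then f₁ p else f₂ p with hFdef
  have hK : IsCompact (tsupport φ) := hc
  have cR := mv_pdR_contDiff hφ
  have cZ := mv_pdZ_contDiff hφ
  have zR : ∀ p ∉ tsupport φ, pdRr φ p = 0 := fun p => mv_pdR_zero
  have zZ : ∀ p ∉ tsupport φ, pdZr φ p = 0 := fun p => mv_pdZ_zero
  have zRZ : ∀ p ∉ tsupport φ, pdZr (pdRr φ) p = 0 :=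
    fun p hp => mv_pdZ_zero fun h => hp (mv_pdR_tsupport φ h)
  have zZR : ∀ p ∉ tsupport φ, pdRr (pdZr φ) p = 0 :=
    fun p hp => mv_pdR_zero fun h => hp (mv_pdZ_tsupport φ h)
  have iQ := mv_mul_int hK (hQ _ hK hs) cR.continuous zR
  have iP := mv_mul_int hK (hP _ hK hs) cZ.continuous zZ
  have iF := mv_mul_int hK (hF _ hK hs) cZ.continuous zZ
  have iFZ := mv_mul_int hK (hF _ hK hs) (mv_pdZ_contDiff cR).continuous zRZ
  have iFR := mv_mul_int hK (hF _ hK hs) (mv_pdR_contDiff cZ).continuous zZR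
  refine ⟨iQ, iP, ?_⟩
  -- first integrate in z
  have A1 : ∫ p, (Q p * pdRr φ p + F p * pdZr (pdRr φ) p) = -(κ * φ a) := by
    have hi := iQ.add iFZ
    rw [Measure.volume_eq_prod] at hi ⊢
    have hae := hi.prod_right_ae
    have hii := integral_prod _ hi
    simp only [Pi.add_apply] at hii
    rw [hii]
    have hne : ∀ᵐ r : ℝ, r ≠ a.1 := by simp [ae_iff]
    have e1 : ∀ᵐ r : ℝ, ∫ z, (Q (r, z) * pdRr φ (r, z) + F (r, z) * pdZr (pdRr φ) (r, z))
        = -(κ * (Set.Iic a.1).indicator (fun r => pdRr φ (r, a.2)) r) := by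
      filter_upwards [hae, hne] with r hr hra
      rcases le_or_gt r 0 with h0 | h0
      · have hz : ∀ z, (r, z) ∉ tsupport φ := fun z h => absurd (show 0 < r from hs h) (by linarith)
        have : (Set.Iic a.1).indicator (fun r => pdRr φ (r, a.2)) r = 0 := by
          rw [Set.indicator_apply]
          split_ifs
          · exact zR _ (hz _)
          · rfl
        rw [this]
        simp [zR _ (hz _), zRZ _ (hz _)]
      · have hin : ∀ z, (r, z) ∈ Hp := fun z => h0
        have hnea : ∀ z, ((r, z) : ℝ × ℝ) ≠ a := fun z h => hra (by rw [← h])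
        have d1 : ∀ z, a.2 ≤ z → HasDerivAt (fun z => f₁ (r, z) * pdRr φ (r, z))
            (Q (r, z) * pdRr φ (r, z) + f₁ (r, z) * pdZr (pdRr φ) (r, z)) z := by
          intro z hz
          have := (mv_hasDerivAt_Z (h1 (r, z) (hin z) (hnea z) hz)).fun_mul (mv_pdZ_hasDerivAt cR r z)
          simpa [mvL_apply] using this
        have d2 : ∀ z, z ≤ a.2 → HasDerivAt (fun z => f₂ (r, z) * pdRr φ (r, z))
            (Q (r, z) * pdRr φ (r, z) + f₂ (r, z) * pdZr (pdRr φ) (r, z)) z := by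
          intro z hz
          have := (mv_hasDerivAt_Z (h2 (r, z) (hin z) (hnea z) hz)).fun_mul (mv_pdZ_hasDerivAt cR r z)
          simpa [mvL_apply] using this
        obtain ⟨t1, t2⟩ := mv_ev_Z hK zR r
        have T1 : Tendsto (fun z => f₁ (r, z) * pdRr φ (r, z)) atTop (𝓝 0) := by
          refine tendsto_const_nhds.congr' ?_
          filter_upwards [t1] with z hz
          rw [hz, mul_zero]
        have T2 : Tendsto (fun z => f₂ (r, z) * pdRr φ (r, z)) atBot (𝓝 0) := by
          refine tendsto_const_nhds.congr' ?_
          filter_upwards [t2] with z hz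
          rw [hz, mul_zero]
        have hr' : Integrable fun z => Q (r, z) * pdRr φ (r, z) + F (r, z) * pdZr (pdRr φ) (r, z) := hr
        have q1 : Set.EqOn (fun z => Q (r, z) * pdRr φ (r, z) + F (r, z) * pdZr (pdRr φ) (r, z))
            (fun z => Q (r, z) * pdRr φ (r, z) + f₁ (r, z) * pdZr (pdRr φ) (r, z)) (Set.Ioi a.2) := by
          intro z hz
          simp only [hFdef]
          rw [if_pos (le_of_lt hz)]
        have q2 : Set.EqOn (fun z => Q (r, z) * pdRr φ (r, z) + F (r, z) * pdZr (pdRr φ) (r, z))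
            (fun z => Q (r, z) * pdRr φ (r, z) + f₂ (r, z) * pdZr (pdRr φ) (r, z)) (Set.Iio a.2) := by
          intro z hz
          simp only [hFdef]
          rw [if_neg (not_le.2 hz)]
        have I1 := integral_Ioi_of_hasDerivAt_of_tendsto
          (d1 a.2 le_rfl).continuousAt.continuousWithinAt (fun z hz => d1 z (le_of_lt hz))
          (hr'.integrableOn.congr_fun q1 measurableSet_Ioi) T1
        have I2 := integral_Iic_of_hasDerivAt_of_tendsto
          (d2 a.2 le_rfl).continuousAt.continuousWithinAt (fun z hz => d2 z (le_of_lt hz))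
          ((integrableOn_Iic_iff_integrableOn_Iio (by simp)).2
            (hr'.integrableOn.congr_fun q2 measurableSet_Iio)) T2
        have split := intervalIntegral.integral_Iic_add_Ioi (b := a.2) hr'.integrableOn
          hr'.integrableOn
        rw [integral_Iic_eq_integral_Iio, setIntegral_congr_fun measurableSet_Iio q2,
          setIntegral_congr_fun measurableSet_Ioi q1, ← integral_Iic_eq_integral_Iio, I1, I2] at split
        rw [← split]
        have hjr := hj r h0 hra
        rw [Set.indicator_apply]
        rcases lt_or_gt_of_ne hra with h | h
        · rw [if_pos h] at hjr
          rw [if_pos (show r ∈ Set.Iic a.1 from h.le)]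
          linear_combination -pdRr φ (r, a.2) * hjr
        · rw [if_neg h.not_gt] at hjr
          rw [if_neg (show r ∉ Set.Iic a.1 from not_le.2 h)]
          linear_combination -pdRr φ (r, a.2) * hjr
    rw [integral_congr_ae e1, integral_neg, integral_const_mul,
      integral_indicator measurableSet_Iic]
    congr 2
    have hic : Continuous fun r : ℝ => pdRr φ (r, a.2) := cR.continuous.comp (by fun_prop)
    have hint : IntegrableOn (fun r : ℝ => pdRr φ (r, a.2)) (Set.Iic a.1) := by
      have hu : Set.Iic a.1 = Set.Iio 0 ∪ Set.Icc 0 a.1 := by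
        rw [Set.Iio_union_Icc_eq_Iic (show (0:ℝ) ≤ a.1 from le_of_lt ha)]
      rw [hu]
      refine IntegrableOn.union ?_ (hic.integrableOn_Icc)
      refine (integrableOn_zero).congr_fun (fun r hr => ?_) measurableSet_Iio
      exact (zR _ fun h => absurd (show 0 < r from hs h) (not_lt.2 (le_of_lt hr))).symm
    have := integral_Iic_of_hasDerivAt_of_tendsto (f := fun r => φ (r, a.2)) (m := 0)
      (mv_pdR_hasDerivAt hφ a.1 a.2).continuousAt.continuousWithinAt
      (fun r _ => mv_pdR_hasDerivAt hφ r a.2) hint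
      (tendsto_const_nhds.congr' (by
        filter_upwards [mv_ev_R hs (ψ := φ) (fun p hp => image_eq_zero_of_notMem_tsupport hp) a.2]
          with r hr
        exact hr.symm))
    rw [this, sub_zero]
  -- then in r
  have A2 : ∫ p, (P p * pdZr φ p + F p * pdRr (pdZr φ) p) = 0 := by
    have hi := iP.add iFR
    rw [Measure.volume_eq_prod] at hi iF ⊢
    have hae := hi.prod_left_ae
    have haeF := iF.prod_left_ae
    have hii := integral_prod_symm _ hi
    simp only [Pi.add_apply] at hii
    rw [hii]
    have hne : ∀ᵐ z : ℝ, z ≠ a.2 := by simp [ae_iff]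
    have e1 : ∀ᵐ z : ℝ, ∫ r, (P (r, z) * pdZr φ (r, z) + F (r, z) * pdRr (pdZr φ) (r, z)) = 0 := by
      filter_upwards [hae, haeF, hne] with z hz hzF hza
      refine integral_eq_zero_of_hasDerivAt_of_integrable
        (f := fun r => F (r, z) * pdZr φ (r, z)) ?_ hz hzF
      intro r
      rcases le_or_gt r 0 with h0 | h0
      · have hn : (r, z) ∉ tsupport φ := fun h => absurd (show 0 < r from hs h) (by linarith)
        rw [zZ _ hn, zZR _ hn, mul_zero, mul_zero, add_zero]
        refine (hasDerivAt_const r (0:ℝ)).congr_of_eventuallyEq ?_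
        have : ∀ᶠ s in 𝓝 r, (s, z) ∉ tsupport φ :=
          ((isClosed_tsupport φ).isOpen_compl.preimage
            (by fun_prop : Continuous fun s : ℝ => (s, z))).mem_nhds hn
        filter_upwards [this] with s hs'
        rw [zZ _ hs', mul_zero]
      · have hnea : ((r, z) : ℝ × ℝ) ≠ a := fun h => hza (by rw [← h])
        rcases lt_or_gt_of_ne hza with h | h
        · have := (mv_hasDerivAt_R (h2 (r, z) h0 hnea h.le)).fun_mul (mv_pdR_hasDerivAt cZ r z)
          simp only [hFdef]
          simp only [if_neg (not_le.2 h)]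
          simpa [mvL_apply] using this
        · have := (mv_hasDerivAt_R (h1 (r, z) h0 hnea h.le)).fun_mul (mv_pdR_hasDerivAt cZ r z)
          simp only [hFdef]
          simp only [if_pos h.le]
          simpa [mvL_apply] using this
    rw [integral_congr_ae e1, integral_zero]
  have e : ∀ p, Q p * pdRr φ p - P p * pdZr φ p = (Q p * pdRr φ p + F p * pdZr (pdRr φ) p)
      - (P p * pdZr φ p + F p * pdRr (pdZr φ) p) := by
    intro p
    rw [mv_pd_symm hφ]
    ring
  rw [integral_congr_ae (Eventually.of_forall e), integral_sub (by exact iQ.add iFZ) (by exact iP.add iFR), A1, A2,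
    sub_zero]

/-! ### Distributional identities for one vortex -/

lemma mv_curl {a : ℝ × ℝ} (ha : a ∈ Hp) {φ : ℝ × ℝ → ℝ} (hφ : ContDiff ℝ (⊤ : ℕ∞) φ)
    (hc : HasCompactSupport φ) (hs : tsupport φ ⊆ Hp) :
    Integrable (fun p => mvJZ a p * pdRr φ p) ∧ Integrable (fun p => mvJR a p * pdZr φ p) ∧
    ∫ p, (mvJZ a p * pdRr φ p - mvJR a p * pdZr φ p) = -((2 * π) * φ a) := by
  refine mv_green ha (f₁ := mvTh 1 a) (f₂ := mvTh (-1) a) (κ := 2 * π) ?_ ?_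
    (fun K hK hH => mvJR_intOn ha hK hH) (fun K hK hH => mvJZ_intOn ha hK hH)
    (fun K hK hH => mvTh_intOn ha hK hH) ?_ hφ hc hs
  · intro p hp hne hz
    refine mvTh_hasFDerivAt (by norm_num) ha ⟨hp, ?_⟩
    rcases eq_or_ne p.1 a.1 with h | h
    · right
      have : a.2 ≠ p.2 := fun h' => hne (Prod.ext h h'.symm)
      have := lt_of_le_of_ne hz this
      linarith
    · exact Or.inl h
  · intro p hp hne hz
    refine mvTh_hasFDerivAt (by norm_num) ha ⟨hp, ?_⟩
    rcases eq_or_ne p.1 a.1 with h | h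
    · right
      have : p.2 ≠ a.2 := fun h' => hne (Prod.ext h h')
      have := lt_of_le_of_ne hz this
      linarith
    · exact Or.inl h
  · intro r hr hne
    exact mvTh_jump ha (p := (r, a.2)) hr hne

lemma mv_div {a : ℝ × ℝ} (ha : a ∈ Hp) {φ : ℝ × ℝ → ℝ} (hφ : ContDiff ℝ (⊤ : ℕ∞) φ)
    (hc : HasCompactSupport φ) (hs : tsupport φ ⊆ Hp) :
    Integrable (fun p => (p.1 * mvJR a p) * pdRr φ p) ∧
    Integrable (fun p => (-(p.1 * mvJZ a p)) * pdZr φ p) ∧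
    ∫ p, ((p.1 * mvJR a p) * pdRr φ p - (-(p.1 * mvJZ a p)) * pdZr φ p) = -(0 * φ a) := by
  refine mv_green ha (f₁ := fun q => q.1 * Avec a q) (f₂ := fun q => q.1 * Avec a q) (κ := 0)
    (fun p hp hne _ => mvrA_hasFDerivAt ha ⟨hp, hne⟩)
    (fun p hp hne _ => mvrA_hasFDerivAt ha ⟨hp, hne⟩)
    (fun K hK hH => ((mvJZ_intOn ha hK hH).continuousOn_mul continuous_fst.continuousOn hK).neg)
    (fun K hK hH => (mvJR_intOn ha hK hH).continuousOn_mul continuous_fst.continuousOn hK)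
    (fun K hK hH => ?_) ?_ hφ hc hs
  · simpa using mvA_intOn ha hK hH
  · intro r _ _
    simp

/-! ### Algebra of currents -/

lemma mvDC_mul {f g : ℝ × ℝ → ℂ} {P Q P' Q' : ℝ} {p : ℝ × ℝ}
    (hf : HasFDerivAt f (mvDC (f p) P Q) p) (hg : HasFDerivAt g (mvDC (g p) P' Q') p) :
    HasFDerivAt (fun q => f q * g q) (mvDC (f p * g p) (P + P') (Q + Q')) p := by
  refine (hf.mul hg).congr_fderiv ?_
  apply ContinuousLinearMap.ext
  intro v
  simp only [ContinuousLinearMap.add_apply, ContinuousLinearMap.smul_apply, mvDC_apply, smul_eq_mul]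
  push_cast
  ring

lemma mvDC_conj {f : ℝ × ℝ → ℂ} {P Q : ℝ} {p : ℝ × ℝ} (hf : HasFDerivAt f (mvDC (f p) P Q) p) :
    HasFDerivAt (fun q => (starRingEnd ℂ) (f q)) (mvDC ((starRingEnd ℂ) (f p)) (-P) (-Q)) p := by
  have h := (Complex.conjCLE.toContinuousLinearMap.hasFDerivAt (x := f p)).comp p hf
  refine h.congr_fderiv ?_
  apply ContinuousLinearMap.ext
  intro v
  simp [mvDC_apply]
  ring

lemma mvDC_current {f : ℝ × ℝ → ℂ} {P Q : ℝ} {p : ℝ × ℝ} (hf : HasFDerivAt f (mvDC (f p) P Q) p)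
    (h1 : ‖f p‖ = 1) : jr f p = P ∧ jz f p = Q := by
  have hn : (starRingEnd ℂ) (f p) * f p = 1 := by
    rw [mul_comm, Complex.mul_conj, Complex.normSq_eq_norm_sq, h1]; simp
  constructor
  · unfold jr pdR
    rw [hf.fderiv, mvDC_apply, ← mul_assoc, ← mul_assoc, hn]
    simp
  · unfold jz pdZ
    rw [hf.fderiv, mvDC_apply, ← mul_assoc, ← mul_assoc, hn]
    simp

lemma mvDC_of_unimodular {v : ℝ × ℝ → ℂ} {p : ℝ × ℝ} (hd : DifferentiableAt ℝ v p)
    (h1 : ∀ᶠ q in 𝓝 p, ‖v q‖ = 1) : HasFDerivAt v (mvDC (v p) (jr v p) (jz v p)) p := by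
  have hn : ∀ q, ‖v q‖ = 1 → v q * (starRingEnd ℂ) (v q) = 1 := by
    intro q hq
    rw [Complex.mul_conj, Complex.normSq_eq_norm_sq, hq]; simp
  have hp := hn p h1.self_of_nhds
  have hv := hd.hasFDerivAt
  have hcv := (Complex.conjCLE.toContinuousLinearMap.hasFDerivAt (x := v p)).comp p hv
  have hm := hv.mul hcv
  have hc : HasFDerivAt (v * (Complex.conjCLE.toContinuousLinearMap ∘ v))
      (0 : ℝ × ℝ →L[ℝ] ℂ) p := by
    refine (hasFDerivAt_const (1:ℂ) p).congr_of_eventuallyEq ?_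
    filter_upwards [h1] with q hq
    exact hn q hq
  have he := hm.unique hc
  have key : ∀ w, ((starRingEnd ℂ) (v p) * fderiv ℝ v p w).re = 0 := by
    intro w
    have := congrArg Complex.re (DFunLike.congr_fun he w)
    simp at this
    simp
    linarith
  have key2 : ∀ w, fderiv ℝ v p w
      = v p * Complex.I * (((starRingEnd ℂ) (v p) * fderiv ℝ v p w).im : ℂ) := by
    intro w
    have h3 : (starRingEnd ℂ) (v p) * fderiv ℝ v p w
        = (((starRingEnd ℂ) (v p) * fderiv ℝ v p w).im : ℂ) * Complex.I := by
      conv_lhs => rw [← Complex.re_add_im ((starRingEnd ℂ) (v p) * fderiv ℝ v p w), key w]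
      simp
    linear_combination v p * h3 - fderiv ℝ v p w * hp
  refine hv.congr_fderiv ?_
  apply ContinuousLinearMap.ext
  intro w
  have hw : w = w.1 • ((1, 0) : ℝ × ℝ) + w.2 • ((0, 1) : ℝ × ℝ) := by
    ext <;> simp
  rw [mvDC_apply, key2 w]
  congr 2
  conv_lhs => rw [hw]
  rw [map_add, map_smul, map_smul]
  simp only [jr, jz, pdR, pdZ, Complex.real_smul, mul_add, Complex.add_im]
  rw [mul_left_comm, Complex.im_ofReal_mul, mul_left_comm ((starRingEnd ℂ) (v p)), Complex.im_ofReal_mul]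
  ring

lemma mvDC_norm_le (u : ℂ) (hu : ‖u‖ = 1) (P Q : ℝ) : ‖mvDC u P Q‖ ≤ |P| + |Q| := by
  apply ContinuousLinearMap.opNorm_le_bound _ (by positivity)
  intro v
  rw [mvDC_apply, norm_mul, norm_mul, hu, Complex.norm_I, one_mul, one_mul, Complex.norm_real,
    Real.norm_eq_abs]
  have h1 : |v.1| ≤ ‖v‖ := norm_fst_le v
  have h2 : |v.2| ≤ ‖v‖ := norm_snd_le v
  calc |P * v.1 + Q * v.2| ≤ |P * v.1| + |Q * v.2| := abs_add_le _ _
    _ = |P| * |v.1| + |Q| * |v.2| := by rw [abs_mul, abs_mul]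
    _ ≤ |P| * ‖v‖ + |Q| * ‖v‖ := by gcongr
    _ = _ := by ring

/-! ### The multi-vortex map -/

/-- The multi-vortex map. -/
def mvUU {n : ℕ} (a : Fin n → ℝ × ℝ) (p : ℝ × ℝ) : ℂ := ∏ i, mvU (a i) p

lemma mvUU_norm {n : ℕ} (a : Fin n → ℝ × ℝ) (p : ℝ × ℝ) : ‖mvUU a p‖ = 1 := by
  simp [mvUU, norm_prod, mvU_norm]

lemma mvUU_hasFDerivAt {n : ℕ} {a : Fin n → ℝ × ℝ} (ha : ∀ i, a i ∈ Hp) {p : ℝ × ℝ}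
    (hp : p ∈ Hp \ Set.range a) :
    HasFDerivAt (mvUU a) (mvDC (mvUU a p) (∑ i, mvJR (a i) p) (∑ i, mvJZ (a i) p)) p := by
  unfold mvUU
  induction (Finset.univ : Finset (Fin n)) using Finset.induction_on with
  | empty =>
    simp only [Finset.prod_empty, Finset.sum_empty]
    refine (hasFDerivAt_const (1:ℂ) p).congr_fderiv ?_
    apply ContinuousLinearMap.ext
    intro v
    simp [mvDC_apply]
  | insert i s hi ih =>
    simp only [Finset.prod_insert hi, Finset.sum_insert hi]
    exact mvDC_mul (mvU_hasFDerivAt (ha i) ⟨hp.1, fun h => hp.2 ⟨i, h.symm⟩⟩) ih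

lemma mvUU_contDiffOn {n : ℕ} {a : Fin n → ℝ × ℝ} (ha : ∀ i, a i ∈ Hp) :
    ContDiffOn ℝ (⊤ : ℕ∞) (mvUU a) (Hp \ Set.range a) := by
  unfold mvUU
  apply contDiffOn_prod
  intro i _
  exact (mvU_contDiffOn (ha i)).mono fun p hp => ⟨hp.1, fun h => hp.2 ⟨i, h.symm⟩⟩

lemma mv_rPsi_hasFDerivAt {n : ℕ} {a : Fin n → ℝ × ℝ} (ha : ∀ i, a i ∈ Hp) {p : ℝ × ℝ}
    (hp : p ∈ Hp \ Set.range a) :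
    HasFDerivAt (rPsiStar a)
      (mvL (-(p.1 * ∑ i, mvJZ (a i) p)) (p.1 * ∑ i, mvJR (a i) p)) p := by
  have h := HasFDerivAt.fun_sum (u := (Finset.univ : Finset (Fin n)))
    (A := fun i q => q.1 * Avec (a i) q) (x := p)
    (fun i _ => mvrA_hasFDerivAt (ha i) ⟨hp.1, fun h => hp.2 ⟨i, h.symm⟩⟩)
  have e : rPsiStar a = fun q => ∑ i, q.1 * Avec (a i) q := by
    funext q
    simp [rPsiStar, PsiStar, Finset.mul_sum]
  rw [e]
  refine h.congr_fderiv ?_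
  apply ContinuousLinearMap.ext
  intro v
  simp only [ContinuousLinearMap.sum_apply, mvL_apply, Finset.sum_add_distrib, ← Finset.sum_mul,
    Finset.sum_neg_distrib, ← Finset.mul_sum]

lemma mv_preconn {n : ℕ} (a : Fin n → ℝ × ℝ) : IsPreconnected (Hp \ Set.range a) := by
  have hinj : Function.Injective (fun q : ℝ × ℝ => ((Real.exp q.1, q.2) : ℝ × ℝ)) := by
    intro q q' h
    have h1 := (Prod.mk.inj h).1
    have h2 := (Prod.mk.inj h).2
    exact Prod.ext (Real.exp_injective h1) h2
  have hfin : ((fun q : ℝ × ℝ => ((Real.exp q.1, q.2) : ℝ × ℝ)) ⁻¹' (Set.range a)).Countable :=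
    ((Set.finite_range a).preimage hinj.injOn).countable
  have hr : 1 < Module.rank ℝ (ℝ × ℝ) := by
    rw [rank_prod', CommSemiring.rank_self]
    norm_num
  have hc := (hfin.isConnected_compl_of_one_lt_rank hr).isPreconnected.image
    (fun q : ℝ × ℝ => ((Real.exp q.1, q.2) : ℝ × ℝ)) (Continuous.continuousOn (by fun_prop))
  convert hc using 1
  ext p
  constructor
  · rintro ⟨h1, h2⟩
    have h1' : 0 < p.1 := h1
    refine ⟨(Real.log p.1, p.2), ?_, ?_⟩
    · simp only [Set.mem_compl_iff, Set.mem_preimage, Real.exp_log h1']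
      exact h2
    · simp [Real.exp_log h1']
  · rintro ⟨q, hq, rfl⟩
    exact ⟨Real.exp_pos _, hq⟩

lemma mv_open_range {n : ℕ} (a : Fin n → ℝ × ℝ) : IsOpen (Hp \ Set.range a) :=
  mvHp_open.sdiff (Set.finite_range a).isClosed

lemma mvUU_locInt {n : ℕ} {a : Fin n → ℝ × ℝ} (ha : ∀ i, a i ∈ Hp) :
    LocallyIntegrableOn (fun p => ‖fderiv ℝ (mvUU a) p‖) Hp volume := by
  rw [locallyIntegrableOn_iff mvHp_open.isLocallyClosed]
  intro K hKH hK
  have hg : IntegrableOn (fun p => ∑ i, (|mvJR (a i) p| + |mvJZ (a i) p|)) K := by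
    apply integrable_finset_sum
    intro i _
    exact (mvJR_intOn (ha i) hK hKH).abs.add (mvJZ_intOn (ha i) hK hKH).abs
  refine Integrable.mono' hg (measurable_fderiv ℝ (mvUU a)).norm.aestronglyMeasurable ?_
  filter_upwards [ae_restrict_mem hK.measurableSet,
    ae_restrict_of_ae ((Set.finite_range a).countable.ae_notMem volume)] with p h1 h2
  rw [(mvUU_hasFDerivAt ha ⟨hKH h1, h2⟩).fderiv, norm_norm]
  refine (mvDC_norm_le _ (mvUU_norm a p) _ _).trans ?_
  rw [Finset.sum_add_distrib]
  exact add_le_add (Finset.abs_sum_le_sum_abs _ _) (Finset.abs_sum_le_sum_abs _ _)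

lemma mv_unique {n : ℕ} {a : Fin n → ℝ × ℝ} {u v : ℝ × ℝ → ℂ}
    (hu : ∀ p ∈ Hp, ‖u p‖ = 1) (hv : ∀ p ∈ Hp, ‖v p‖ = 1)
    (du : ∀ p ∈ Hp \ Set.range a, DifferentiableAt ℝ u p)
    (dv : ∀ p ∈ Hp \ Set.range a, DifferentiableAt ℝ v p)
    (hj : ∀ p ∈ Hp \ Set.range a, jr v p = jr u p ∧ jz v p = jz u p) :
    ∃ c : ℂ, ‖c‖ = 1 ∧ ∀ p ∈ Hp \ Set.range a, v p = c * u p := by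
  have hO := mv_open_range a
  have hn : ∀ p ∈ Hp, (starRingEnd ℂ) (u p) * u p = 1 := by
    intro p hp
    rw [mul_comm, Complex.mul_conj, Complex.normSq_eq_norm_sq, hu p hp]; simp
  have hz : ∀ p ∈ Hp \ Set.range a,
      HasFDerivAt (fun q => v q * (starRingEnd ℂ) (u q)) (0 : ℝ × ℝ →L[ℝ] ℂ) p := by
    intro p hp
    have hN : Hp ∈ 𝓝 p := mvHp_open.mem_nhds hp.1
    have h1 := mvDC_of_unimodular (dv p hp) (by filter_upwards [hN] with q hq using hv q hq)
    have h2 := mvDC_of_unimodular (du p hp) (by filter_upwards [hN] with q hq using hu q hq)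
    rw [(hj p hp).1, (hj p hp).2] at h1
    refine (mvDC_mul h1 (mvDC_conj h2)).congr_fderiv ?_
    apply ContinuousLinearMap.ext
    intro w
    simp [mvDC_apply]
  rcases (Hp \ Set.range a).eq_empty_or_nonempty with h | ⟨p₀, hp₀⟩
  · exact ⟨1, by simp, fun p hp => by rw [h] at hp; exact absurd hp (Set.notMem_empty p)⟩
  · refine ⟨v p₀ * (starRingEnd ℂ) (u p₀), ?_, ?_⟩
    · rw [norm_mul, RCLike.norm_conj, hu p₀ hp₀.1, hv p₀ hp₀.1, one_mul]
    · intro p hp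
      have := hO.is_const_of_fderiv_eq_zero (𝕜 := ℝ) (mv_preconn a)
        (fun q hq => (hz q hq).differentiableAt.differentiableWithinAt)
        (fun q hq => (hz q hq).fderiv) hp hp₀
      rw [← this, mul_assoc, hn p hp.1, mul_one]

/-- **Existence and uniqueness of the singular unimodular multi-vortex map**,
together with its distributional identities. -/
theorem singular_multivortex_map (n : ℕ) (hn : 1 ≤ n) (a : Fin n → ℝ × ℝ)
    (ha : ∀ i, a i ∈ Hp) (hinj : Function.Injective a) :
    ∃ u : ℝ × ℝ → ℂ,
      (ContDiffOn ℝ (⊤ : ℕ∞) u (Hp \ Set.range a) ∧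
        (∀ p ∈ Hp, ‖u p‖ = 1) ∧
        LocallyIntegrableOn (fun p => ‖fderiv ℝ u p‖) Hp volume ∧
        ∀ p ∈ Hp \ Set.range a,
          p.1 * jr u p = pdZr (rPsiStar a) p ∧ p.1 * jz u p = -pdRr (rPsiStar a) p) ∧
      (∀ φ : ℝ × ℝ → ℝ, ContDiff ℝ (⊤ : ℕ∞) φ → HasCompactSupport φ → tsupport φ ⊆ Hp →
        (∫ p in Hp, (p.1 * jr u p * pdRr φ p + p.1 * jz u p * pdZr φ p)) = 0 ∧
        -(∫ p in Hp, (jz u p * pdRr φ p - jr u p * pdZr φ p)) = 2 * π * ∑ i, φ (a i)) ∧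
      ∀ v : ℝ × ℝ → ℂ,
        (ContDiffOn ℝ (⊤ : ℕ∞) v (Hp \ Set.range a) ∧
          (∀ p ∈ Hp, ‖v p‖ = 1) ∧
          LocallyIntegrableOn (fun p => ‖fderiv ℝ v p‖) Hp volume ∧
          ∀ p ∈ Hp \ Set.range a,
            p.1 * jr v p = pdZr (rPsiStar a) p ∧ p.1 * jz v p = -pdRr (rPsiStar a) p) →
        ∃ c : ℂ, ‖c‖ = 1 ∧ ∀ p ∈ Hp \ Set.range a, v p = c * u p := by
  have hr : ∀ p : ℝ × ℝ, p ∈ Hp \ Set.range a →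
      jr (mvUU a) p = ∑ i, mvJR (a i) p ∧ jz (mvUU a) p = ∑ i, mvJZ (a i) p :=
    fun p hp => mvDC_current (mvUU_hasFDerivAt ha hp) (mvUU_norm a p)
  have hcur : ∀ p ∈ Hp \ Set.range a,
      p.1 * jr (mvUU a) p = pdZr (rPsiStar a) p ∧ p.1 * jz (mvUU a) p = -pdRr (rPsiStar a) p := by
    intro p hp
    unfold pdZr pdRr
    rw [(mv_rPsi_hasFDerivAt ha hp).fderiv, mvL_apply, mvL_apply, (hr p hp).1, (hr p hp).2]
    constructor <;> simp
  refine ⟨mvUU a, ⟨mvUU_contDiffOn ha, fun p _ => mvUU_norm a p, mvUU_locInt ha, hcur⟩, ?_, ?_⟩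
  · intro φ hφ hc hs
    have hae : ∀ᵐ p : ℝ × ℝ, p ∉ Set.range a := (Set.finite_range a).countable.ae_notMem volume
    have zR : ∀ p ∉ Hp, pdRr φ p = 0 := fun p hp => mv_pdR_zero fun h => hp (hs h)
    have zZ : ∀ p ∉ Hp, pdZr φ p = 0 := fun p hp => mv_pdZ_zero fun h => hp (hs h)
    constructor
    · rw [setIntegral_eq_integral_of_forall_compl_eq_zero
        (fun p hp => by rw [zR p hp, zZ p hp]; simp)]
      have e : ∀ᵐ p : ℝ × ℝ, p.1 * jr (mvUU a) p * pdRr φ p + p.1 * jz (mvUU a) p * pdZr φ p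
          = ∑ i, ((p.1 * mvJR (a i) p) * pdRr φ p - (-(p.1 * mvJZ (a i) p)) * pdZr φ p) := by
        filter_upwards [hae] with p hp
        by_cases hH : p ∈ Hp
        · rw [(hr p ⟨hH, hp⟩).1, (hr p ⟨hH, hp⟩).2]
          simp only [Finset.mul_sum, Finset.sum_mul, ← Finset.sum_add_distrib]
          exact Finset.sum_congr rfl fun i _ => by ring
        · simp [zR p hH, zZ p hH]
      rw [integral_congr_ae e, integral_finsetSum _ fun i _ =>
        (by exact (mv_div (ha i) hφ hc hs).1.sub (mv_div (ha i) hφ hc hs).2.1)]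
      apply Finset.sum_eq_zero
      intro i _
      rw [(mv_div (ha i) hφ hc hs).2.2]
      simp
    · rw [setIntegral_eq_integral_of_forall_compl_eq_zero
        (fun p hp => by rw [zR p hp, zZ p hp]; simp)]
      have e : ∀ᵐ p : ℝ × ℝ, jz (mvUU a) p * pdRr φ p - jr (mvUU a) p * pdZr φ p
          = ∑ i, (mvJZ (a i) p * pdRr φ p - mvJR (a i) p * pdZr φ p) := by
        filter_upwards [hae] with p hp
        by_cases hH : p ∈ Hp
        · rw [(hr p ⟨hH, hp⟩).1, (hr p ⟨hH, hp⟩).2]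
          simp only [Finset.sum_mul, ← Finset.sum_sub_distrib]
        · simp [zR p hH, zZ p hH]
      rw [integral_congr_ae e, integral_finsetSum _ fun i _ =>
        (by exact (mv_curl (ha i) hφ hc hs).1.sub (mv_curl (ha i) hφ hc hs).2.1),
        Finset.mul_sum, ← Finset.sum_neg_distrib]
      apply Finset.sum_congr rfl
      intro i _
      rw [(mv_curl (ha i) hφ hc hs).2.2, neg_neg]
  · rintro v ⟨v1, v2, -, v4⟩
    have hO := mv_open_range a
    refine mv_unique (fun p _ => mvUU_norm a p) v2
      (fun p hp => (mvUU_hasFDerivAt ha hp).differentiableAt)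
      (fun p hp => (v1.contDiffAt (hO.mem_nhds hp)).differentiableAt (by norm_num)) ?_
    intro p hp
    have h0 : p.1 ≠ 0 := ne_of_gt hp.1
    constructor
    · exact mul_left_cancel₀ h0 ((v4 p hp).1.trans (hcur p hp).1.symm)
    · exact mul_left_cancel₀ h0 ((v4 p hp).2.trans (hcur p hp).2.symm)

end
end
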